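/- arXiv:2211.10172 — 3 statements merged into one kernel-verified Lean document; each statement's English description precedes it below -/
import Mathlib

section
/- Let H be a separable Hilbert space and (λ_n) a sequence of symmetric Lévy measures on H such that the infinitely divisible measures μ_n with characteristics (0,0,λ_n) converge weakly to an infinitely divisible measure μ with characteristics (0,0,λ). Then ∫_H (‖h‖² ∧ 1) λ_n(dh) → ∫_H (‖h‖² ∧ 1) λ(dh). -/
open MeasureTheory Filter Topology RealInnerProductSpace

set_option linter.unusedSectionVars false

noncomputable section

lemma aux_min_le (s : ℝ) (hs : 0 ≤ s) : min s 1 ≤ 3 * (1 - Real.exp (-s / 2)) := by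
  have h1 : Real.exp (-s/2) ≤ 1 / (1 + s/2) := by
    rw [neg_div, Real.exp_neg, one_div]
    apply inv_anti₀ (by positivity)
    linarith [Real.add_one_le_exp (s/2)]
  have h2 : min s 1 ≤ 3 * (1 - 1 / (1 + s/2)) := by
    have : 3 * (1 - 1 / (1 + s/2)) = 3 * s / (2 + s) := by field_simp; ring
    rw [this, le_div_iff₀ (by positivity)]
    rcases le_total s 1 with h | h
    · rw [min_eq_left h]; nlinarith
    · rw [min_eq_right h]; nlinarith
  linarith

lemma aux_le_min (s : ℝ) (hs : 0 ≤ s) : 1 - Real.exp (-s / 2) ≤ min s 1 := by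
  apply le_min
  · linarith [Real.add_one_le_exp (-s/2)]
  · linarith [Real.exp_pos (-s/2)]

section gen
variable {E : Type*} [NormedAddCommGroup E] [InnerProductSpace ℝ E]

lemma aux_cos_le (u h : E) : 1 - Real.cos ⟪u, h⟫ ≤ (2 + ‖u‖ ^ 2) * min (‖h‖ ^ 2) 1 := by
  have h1 := Real.one_sub_sq_div_two_le_cos (x := ⟪u, h⟫)
  have h2 := Real.neg_one_le_cos ⟪u, h⟫
  have h3 : ⟪u, h⟫ ^ 2 ≤ ‖u‖ ^ 2 * ‖h‖ ^ 2 := by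
    rw [← mul_pow, ← sq_abs]
    gcongr
    exact abs_real_inner_le_norm u h
  rcases le_total (‖h‖ ^ 2) 1 with h' | h'
  · rw [min_eq_left h']; nlinarith [sq_nonneg ‖u‖, sq_nonneg ‖h‖]
  · rw [min_eq_right h']; nlinarith [sq_nonneg ‖u‖]

lemma aux_cos_nonneg (u h : E) : 0 ≤ 1 - Real.cos ⟪u, h⟫ := by
  linarith [Real.cos_le_one ⟪u, h⟫]

variable [MeasurableSpace E] [BorelSpace E] [SecondCountableTopology E]

lemma int_cos {lam : Measure E} (hi : Integrable (fun h : E => min (‖h‖ ^ 2) 1) lam) (u : E) :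
    Integrable (fun h => 1 - Real.cos ⟪u, h⟫) lam := by
  refine (hi.const_mul (2 + ‖u‖ ^ 2)).mono' (by fun_prop) (ae_of_all _ fun h => ?_)
  rw [Real.norm_of_nonneg (aux_cos_nonneg u h)]
  exact aux_cos_le u h

lemma q_nonneg (h : E) : 0 ≤ 1 - Real.exp (-‖h‖ ^ 2 / 2) := by
  have : Real.exp (-‖h‖ ^ 2 / 2) ≤ 1 := Real.exp_le_one_iff.2 (by nlinarith [sq_nonneg ‖h‖])
  linarith

lemma int_q {lam : Measure E} (hi : Integrable (fun h : E => min (‖h‖ ^ 2) 1) lam) :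
    Integrable (fun h : E => 1 - Real.exp (-‖h‖ ^ 2 / 2)) lam := by
  refine hi.mono' (by fun_prop) (ae_of_all _ fun h => ?_)
  rw [Real.norm_of_nonneg (q_nonneg h)]
  exact aux_le_min _ (sq_nonneg _)

lemma re_int (ν : Measure E) [IsFiniteMeasure ν] (φ : E → ℝ) (hφ : Measurable φ) :
    (∫ x, Complex.exp ((φ x : ℂ) * Complex.I) ∂ν).re = ∫ x, Real.cos (φ x) ∂ν := by
  have hi : Integrable (fun x => Complex.exp ((φ x : ℂ) * Complex.I)) ν := by
    refine (integrable_const (1:ℝ)).mono' (by fun_prop) (ae_of_all _ fun x => ?_)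
    rw [Complex.norm_exp_ofReal_mul_I]
  rw [← Complex.reCLM_apply, ← Complex.reCLM.integral_comp_comm hi]
  simp [Complex.exp_ofReal_mul_I_re]

def LP (μ lam : Measure E) : Prop :=
  Integrable (fun h : E => min (‖h‖ ^ 2) 1) lam ∧
    ∀ u : E, ∫ x, Real.cos ⟪u, x⟫ ∂μ = Real.exp (-∫ h, (1 - Real.cos ⟪u, h⟫) ∂lam)

lemma int_min_map {F : Type*} [NormedAddCommGroup F] [InnerProductSpace ℝ F]
    [MeasurableSpace F] [BorelSpace F] [SecondCountableTopology F]
    {lam : Measure E} (h : Integrable (fun h : E => min (‖h‖ ^ 2) 1) lam) (T : E →L[ℝ] F) :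
    Integrable (fun h : F => min (‖h‖ ^ 2) 1) (lam.map T) := by
  rw [integrable_map_measure (by fun_prop) (by fun_prop)]
  refine (h.const_mul (‖T‖ ^ 2 + 1)).mono' (by fun_prop) (ae_of_all _ fun x => ?_)
  have h1 : ‖T x‖ ^ 2 ≤ ‖T‖ ^ 2 * ‖x‖ ^ 2 := by
    rw [← mul_pow]; gcongr; exact T.le_opNorm x
  simp only [Function.comp]
  rw [Real.norm_of_nonneg (by positivity)]
  rcases le_total (‖x‖ ^ 2) 1 with h | h
  · rw [min_eq_left h]; exact (min_le_left _ _).trans (by nlinarith [sq_nonneg ‖x‖])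
  · rw [min_eq_right h]; exact (min_le_right _ _).trans (by nlinarith [sq_nonneg ‖T‖])

lemma psi_map {F : Type*} [NormedAddCommGroup F] [InnerProductSpace ℝ F] [CompleteSpace E]
    [CompleteSpace F] [MeasurableSpace F] [BorelSpace F] [SecondCountableTopology F]
    (lam : Measure E) (T : E →L[ℝ] F) (u : F) :
    ∫ h, (1 - Real.cos ⟪u, h⟫) ∂(lam.map T)
      = ∫ h, (1 - Real.cos ⟪ContinuousLinearMap.adjoint T u, h⟫) ∂lam := by
  rw [integral_map (by fun_prop) (by fun_prop)]
  simp [ContinuousLinearMap.adjoint_inner_left]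

lemma LP.map {F : Type*} [NormedAddCommGroup F] [InnerProductSpace ℝ F] [CompleteSpace E]
    [CompleteSpace F] [MeasurableSpace F] [BorelSpace F] [SecondCountableTopology F]
    {μ lam : Measure E} (h : LP μ lam) (T : E →L[ℝ] F) : LP (μ.map T) (lam.map T) := by
  refine ⟨int_min_map h.1 T, fun u => ?_⟩
  rw [psi_map, ← h.2, integral_map (by fun_prop) (by fun_prop)]
  simp [ContinuousLinearMap.adjoint_inner_left]

end gen

section fin
open ProbabilityTheory
variable {E : Type*} [NormedAddCommGroup E] [InnerProductSpace ℝ E] [FiniteDimensional ℝ E]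
  [MeasurableSpace E] [BorelSpace E]

lemma gauss_cos (y : E) : ∫ g, Real.cos ⟪g, y⟫ ∂(stdGaussian E) = Real.exp (-‖y‖ ^ 2 / 2) := by
  have := charFun_stdGaussian y
  rw [charFun_apply] at this
  rw [← re_int _ _ (by fun_prop), this]
  norm_cast

lemma int_bdd_cos {ν : Measure E} [IsFiniteMeasure ν] (φ : E → ℝ) (hφ : Measurable φ) :
    Integrable (fun x => Real.cos (φ x)) ν :=
  (integrable_const (1:ℝ)).mono' (by fun_prop) (ae_of_all _ fun x => by
    simpa using Real.abs_cos_le_one _)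

lemma gauss_one_sub (y : E) :
    ∫ g, (1 - Real.cos ⟪g, y⟫) ∂(stdGaussian E) = 1 - Real.exp (-‖y‖ ^ 2 / 2) := by
  rw [integral_sub (integrable_const _) (int_bdd_cos _ (by fun_prop)), gauss_cos]
  simp

lemma gauss_sq (y : E) :
    ∫ g, (1 - Real.cos ⟪g, y⟫) ^ 2 ∂(stdGaussian E) ≤ 3 * (1 - Real.exp (-‖y‖ ^ 2 / 2)) ^ 2 := by
  have h1 : ∀ g : E, (1 - Real.cos ⟪g, y⟫) ^ 2
      = 3 / 2 - 2 * Real.cos ⟪g, y⟫ + (1 / 2) * Real.cos ⟪g, (2:ℝ) • y⟫ := fun g => by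
    rw [inner_smul_right, Real.cos_two_mul]; ring
  simp_rw [h1]
  rw [integral_add, integral_sub, integral_const_mul, integral_const_mul, gauss_cos, gauss_cos]
  · have : Real.exp (-‖(2:ℝ) • y‖ ^ 2 / 2) = Real.exp (-‖y‖ ^ 2 / 2) ^ 4 := by
      rw [← Real.exp_nat_mul, norm_smul]; norm_num; ring
    rw [this]
    set α := Real.exp (-‖y‖ ^ 2 / 2)
    have h0 : 0 < α := Real.exp_pos _
    have h1 : α ≤ 1 := by have := q_nonneg y; linarith
    simp
    have : 3 * (1 - α) ^ 2 - (3/2 - 2 * α + 1/2 * α^4) = (1-α)^2 * ((1 - α) * (3 + α)) / 2 := by ring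
    have : 0 ≤ (1-α)^2 * ((1 - α) * (3 + α)) / 2 := by
      have : 0 ≤ 1 - α := by linarith
      positivity
    linarith
  · exact integrable_const _
  · exact (int_bdd_cos _ (by fun_prop)).const_mul _
  · exact (integrable_const _).sub ((int_bdd_cos _ (by fun_prop)).const_mul _)
  · exact (int_bdd_cos _ (by fun_prop)).const_mul _

lemma gauss_int4 : Integrable (fun g : E => (2 + ‖g‖ ^ 2) ^ 2) (stdGaussian E) := by
  have h2 : Integrable (fun g : E => ‖g‖ ^ 2) (stdGaussian E) := by
    simpa using (IsGaussian.memLp_id (stdGaussian E) 2 (by norm_num)).integrable_norm_pow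
      (by norm_num)
  have h4 : Integrable (fun g : E => ‖g‖ ^ 4) (stdGaussian E) := by
    simpa using (IsGaussian.memLp_id (stdGaussian E) 4 (by norm_num)).integrable_norm_pow
      (by norm_num)
  have : (fun g : E => (2 + ‖g‖ ^ 2) ^ 2) = fun g => 4 + 4 * ‖g‖ ^ 2 + ‖g‖ ^ 4 := by
    ext; ring
  rw [this]
  exact ((integrable_const _).add (h2.const_mul _)).add h4

lemma gauss_int2 : Integrable (fun g : E => 2 + ‖g‖ ^ 2) (stdGaussian E) := by
  refine gauss_int4.mono' (by fun_prop) (ae_of_all _ fun g => ?_)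
  rw [Real.norm_of_nonneg (by positivity)]
  nlinarith [sq_nonneg ‖g‖, sq_nonneg (‖g‖^2)]

lemma int_prod {lam : Measure E} [SFinite lam]
    (hi : Integrable (fun h : E => min (‖h‖ ^ 2) 1) lam) :
    Integrable (fun p : E × E => 1 - Real.cos ⟪p.1, p.2⟫) ((stdGaussian E).prod lam) := by
  refine (gauss_int2.mul_prod hi).mono' (by fun_prop) (ae_of_all _ fun p => ?_)
  rw [Real.norm_of_nonneg (aux_cos_nonneg _ _)]
  exact aux_cos_le _ _

lemma gauss_psi {lam : Measure E} [SFinite lam]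
    (hi : Integrable (fun h : E => min (‖h‖ ^ 2) 1) lam) :
    ∫ g, (∫ h, (1 - Real.cos ⟪g, h⟫) ∂lam) ∂(stdGaussian E)
      = ∫ h, (1 - Real.exp (-‖h‖ ^ 2 / 2)) ∂lam := by
  rw [integral_integral_swap (int_prod hi)]
  simp_rw [gauss_one_sub]

lemma int_prod_sq {lam : Measure E} [SFinite lam]
    (hi : Integrable (fun h : E => min (‖h‖ ^ 2) 1) lam) :
    Integrable (fun p : E × E => (1 - Real.cos ⟪p.1, p.2⟫) ^ 2 / (1 - Real.exp (-‖p.2‖ ^ 2 / 2)))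
      ((stdGaussian E).prod lam) := by
  refine (gauss_int4.mul_prod (hi.const_mul 3)).mono' ?_ (ae_of_all _ fun p => ?_)
  · exact Measurable.aestronglyMeasurable (by fun_prop)
  rw [Real.norm_of_nonneg (div_nonneg (sq_nonneg _) (q_nonneg _))]
  have h1 := aux_cos_le p.1 p.2
  have h2 := aux_min_le (‖p.2‖ ^ 2) (sq_nonneg _)
  have h3 := aux_cos_nonneg p.1 p.2
  have h4 : 0 ≤ min (‖p.2‖ ^ 2) 1 := by positivity
  rcases (q_nonneg p.2).eq_or_lt with h | h
  · rw [← h]; simp; positivity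
  rw [div_le_iff₀ h]
  calc _ ≤ ((2 + ‖p.1‖ ^ 2) * min (‖p.2‖ ^ 2) 1) ^ 2 := by gcongr
    _ = (2 + ‖p.1‖ ^ 2) ^ 2 * (min (‖p.2‖ ^ 2) 1 * min (‖p.2‖ ^ 2) 1) := by ring
    _ ≤ (2 + ‖p.1‖ ^ 2) ^ 2 * (min (‖p.2‖ ^ 2) 1 * (3 * (1 - Real.exp (-‖p.2‖ ^ 2 / 2)))) := by
      gcongr
    _ = _ := by ring

lemma gauss_R {lam : Measure E} [SFinite lam]
    (hi : Integrable (fun h : E => min (‖h‖ ^ 2) 1) lam) :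
    ∫ g, (∫ h, (1 - Real.cos ⟪g, h⟫) ^ 2 / (1 - Real.exp (-‖h‖ ^ 2 / 2)) ∂lam) ∂(stdGaussian E)
      ≤ 3 * ∫ h, (1 - Real.exp (-‖h‖ ^ 2 / 2)) ∂lam := by
  rw [integral_integral_swap (int_prod_sq hi), ← integral_const_mul]
  apply integral_mono (int_prod_sq hi).integral_prod_right ((int_q hi).const_mul _)
  intro h
  simp only [integral_div]
  rcases (q_nonneg h).eq_or_lt with h' | h'
  · rw [← h']; simp
  rw [div_le_iff₀ h']
  refine (gauss_sq h).trans (le_of_eq (by ring))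

lemma psi_sq_le {lam : Measure E} {g : E}
    (hi : Integrable (fun h : E => min (‖h‖ ^ 2) 1) lam)
    (hR : Integrable (fun h => (1 - Real.cos ⟪g, h⟫) ^ 2 / (1 - Real.exp (-‖h‖ ^ 2 / 2))) lam)
    (s : ℝ) :
    2 * s * (∫ h, (1 - Real.cos ⟪g, h⟫) ∂lam) ≤
      (∫ h, (1 - Real.cos ⟪g, h⟫) ^ 2 / (1 - Real.exp (-‖h‖ ^ 2 / 2)) ∂lam)
       + s ^ 2 * ∫ h, (1 - Real.exp (-‖h‖ ^ 2 / 2)) ∂lam := by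
  rw [← integral_const_mul, ← integral_const_mul, ← integral_add hR ((int_q hi).const_mul _)]
  apply integral_mono ((int_cos hi g).const_mul _) (hR.add ((int_q hi).const_mul _))
  intro h
  simp only [Pi.add_apply]
  have h1 := aux_cos_le g h
  have h2 := aux_min_le (‖h‖ ^ 2) (sq_nonneg _)
  have h3 := aux_cos_nonneg g h
  rcases (q_nonneg h).eq_or_lt with h' | h'
  · have : 1 - Real.cos ⟪g, h⟫ = 0 := by
      rw [← h'] at h2
      have : (2 + ‖g‖^2) * min (‖h‖ ^ 2) 1 ≤ 0 :=
        mul_nonpos_of_nonneg_of_nonpos (by positivity) (by linarith)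
      linarith
    rw [← h', this]; simp
  · set q := 1 - Real.exp (-‖h‖ ^ 2 / 2)
    set f := 1 - Real.cos ⟪g, h⟫
    have : f ^ 2 / q + s ^ 2 * q - 2 * s * f = (f - s * q) ^ 2 / q := by field_simp; ring
    have : 0 ≤ (f - s * q) ^ 2 / q := by positivity
    linarith

lemma keyA {μ lam : Measure E} [IsProbabilityMeasure μ] [SFinite lam] (hLP : LP μ lam)
    (hδ : ∫ x, (1 - Real.exp (-‖x‖ ^ 2 / 2)) ∂μ < 1 / 6) :
    ∫ h, (1 - Real.exp (-‖h‖ ^ 2 / 2)) ∂lam ≤ 2 * ∫ x, (1 - Real.exp (-‖x‖ ^ 2 / 2)) ∂μ := by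
  obtain ⟨hi, hc⟩ := hLP
  set a := ∫ h, (1 - Real.exp (-‖h‖ ^ 2 / 2)) ∂lam with ha
  set δ := ∫ x, (1 - Real.exp (-‖x‖ ^ 2 / 2)) ∂μ with hδ'
  have ha0 : 0 ≤ a := integral_nonneg fun h => q_nonneg h
  set ψ : E → ℝ := fun g => ∫ h, (1 - Real.cos ⟪g, h⟫) ∂lam with hψ
  have hψ0 : ∀ g, 0 ≤ ψ g := fun g => integral_nonneg fun h => aux_cos_nonneg g h
  set R : E → ℝ := fun g =>
    ∫ h, (1 - Real.cos ⟪g, h⟫) ^ 2 / (1 - Real.exp (-‖h‖ ^ 2 / 2)) ∂lam with hR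
  have iψ : Integrable ψ (stdGaussian E) := (int_prod hi).integral_prod_left
  have iR : Integrable R (stdGaussian E) := (int_prod_sq hi).integral_prod_left
  have iE : Integrable (fun g => Real.exp (-ψ g)) (stdGaussian E) := by
    refine (integrable_const (1:ℝ)).mono' (Real.continuous_exp.comp_aestronglyMeasurable
      iψ.1.neg) (ae_of_all _ fun g => ?_)
    rw [Real.norm_of_nonneg (Real.exp_pos _).le]
    exact Real.exp_le_one_iff.2 (by linarith [hψ0 g])
  have e1 : ∫ g, ψ g ∂(stdGaussian E) = a := gauss_psi hi
  have e2 : ∫ g, R g ∂(stdGaussian E) ≤ 3 * a := gauss_R hi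
  have e3 : ∫ g, (1 - Real.exp (-ψ g)) ∂(stdGaussian E) = δ := by
    have ic : Integrable (fun p : E × E => 1 - Real.cos ⟪p.1, p.2⟫) ((stdGaussian E).prod μ) := by
      refine (integrable_const (2:ℝ)).mono' (by fun_prop) (ae_of_all _ fun p => ?_)
      rw [Real.norm_of_nonneg (aux_cos_nonneg _ _)]
      linarith [Real.neg_one_le_cos ⟪p.1, p.2⟫]
    have : ∀ g, 1 - Real.exp (-ψ g) = ∫ x, (1 - Real.cos ⟪g, x⟫) ∂μ := fun g => by
      rw [integral_sub (integrable_const _) (int_bdd_cos _ (by fun_prop)), hc]; simp [hψ]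
    simp_rw [this]
    rw [integral_integral_swap ic]
    simp_rw [gauss_one_sub]
    rfl
  have hRae : ∀ᵐ g ∂(stdGaussian E), ψ g ^ 2 ≤ a * R g := by
    filter_upwards [(int_prod_sq hi).prod_right_ae] with g hg
    have hs := psi_sq_le hi hg
    change ∀ s : ℝ, 2 * s * ψ g ≤ R g + s ^ 2 * a at hs
    rcases ha0.eq_or_lt with h | h
    · rw [← h] at hs ⊢
      by_contra hcon
      have hp : 0 < ψ g := lt_of_le_of_ne (hψ0 g) (fun h => hcon (by simp [← h]))
      have := hs ((R g + 1) / (2 * ψ g))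
      have h2 : 2 * ((R g + 1) / (2 * ψ g)) * ψ g = R g + 1 := by field_simp
      linarith
    · have := hs (ψ g / a)
      have h1 : 2 * (ψ g / a) * ψ g = 2 * (ψ g ^2 / a) := by ring
      have h2 : (ψ g / a) ^ 2 * a = ψ g ^ 2 / a := by field_simp
      have h3 : ψ g ^ 2 / a ≤ R g := by linarith
      rw [div_le_iff₀ h] at h3; linarith
  have key : ∀ t : ℝ, 0 ≤ t → t ≤ 1 → t * a - t ^ 2 / 2 * (3 * a ^ 2) ≤ δ := by
    intro t ht0 ht1
    have : ∫ g, (t * ψ g - t ^ 2 / 2 * (a * R g)) ∂(stdGaussian E) ≤ δ := by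
      rw [← e3]
      apply integral_mono_ae ((iψ.const_mul _).sub ((iR.const_mul _).const_mul _))
        ((integrable_const _).sub iE)
      filter_upwards [hRae] with g hg
      have hx : 0 ≤ t * ψ g := mul_nonneg ht0 (hψ0 g)
      have h1 : Real.exp (-ψ g) ≤ Real.exp (-(t * ψ g)) := by
        apply Real.exp_le_exp.2; nlinarith [hψ0 g]
      have h2 : Real.exp (-(t * ψ g)) ≤ 1 - t * ψ g + (t * ψ g) ^ 2 / 2 := by
        have h := Real.quadratic_le_exp_of_nonneg hx
        rw [Real.exp_neg, inv_le_comm₀ (Real.exp_pos _) (by nlinarith [sq_nonneg (t * ψ g - 1)])]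
        refine le_trans ?_ h
        rw [inv_le_iff_one_le_mul₀ (by nlinarith [sq_nonneg (t * ψ g - 1)])]
        nlinarith [sq_nonneg ((t * ψ g)^2)]
      have h3 : (t * ψ g) ^ 2 / 2 ≤ t ^ 2 / 2 * (a * R g) := by
        rw [mul_pow]; nlinarith [sq_nonneg t]
      simp only [Pi.sub_apply]
      linarith
    rw [integral_sub (iψ.const_mul _) ((iR.const_mul _).const_mul _), integral_const_mul,
      integral_const_mul, integral_const_mul, e1] at this
    have h4 : t ^ 2 / 2 * (a * ∫ g, R g ∂(stdGaussian E)) ≤ t ^ 2 / 2 * (a * (3 * a)) := by gcongr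
    nlinarith
  by_cases h : 3 * a ≤ 1
  · have := key 1 zero_le_one le_rfl
    nlinarith
  · push Not at h
    have hpos : 0 < a := by linarith
    have := key (1 / (3 * a)) (by positivity) (by rw [div_le_one (by positivity)]; linarith)
    have h5 : 1 / (3 * a) * a - (1 / (3 * a)) ^ 2 / 2 * (3 * a ^ 2) = 1 / 6 := by field_simp; norm_num
    linarith

end fin

section finB
open ProbabilityTheory
variable {E : Type*} [NormedAddCommGroup E] [InnerProductSpace ℝ E] [FiniteDimensional ℝ E]
  [MeasurableSpace E] [BorelSpace E]

lemma levyC (M : ℕ → FiniteMeasure E) (M0 : FiniteMeasure E)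
    (h : ∀ t : E, Tendsto (fun n => charFun (M n : Measure E) t) atTop
      (𝓝 (charFun (M0 : Measure E) t))) :
    Tendsto M atTop (𝓝 M0) := by
  have hm : Tendsto (fun n => (M n).mass) atTop (𝓝 M0.mass) := by
    have h0 := (Complex.continuous_re.tendsto _).comp (h 0)
    simp only [Function.comp_def, charFun_zero, Complex.ofReal_re] at h0
    rw [← NNReal.tendsto_coe]
    exact h0
  by_cases hz : M0 = 0
  · subst hz
    apply FiniteMeasure.tendsto_zero_of_tendsto_zero_mass
    simpa using hm
  · apply FiniteMeasure.tendsto_of_tendsto_normalize_testAgainstNN_of_tendsto_mass _ hm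
    apply ProbabilityMeasure.tendsto_of_tendsto_charFun
    intro t
    have hne : M0.mass ≠ 0 := M0.mass_nonzero_iff.2 hz
    have e : ∀ N : FiniteMeasure E, N.mass ≠ 0 →
        charFun (N.normalize : Measure E) t = (N.mass⁻¹) • charFun (N : Measure E) t := by
      intro N hN
      rw [charFun_apply, N.toMeasure_normalize_eq_of_nonzero (N.mass_nonzero_iff.1 hN)]
      exact integral_smul_nnreal_measure _ _
    rw [e M0 hne]
    have : Tendsto (fun n => ((M n).mass⁻¹) • charFun (M n : Measure E) t) atTop
        (𝓝 ((M0.mass⁻¹) • charFun (M0 : Measure E) t)) := (hm.inv₀ hne).smul (h t)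
    apply this.congr'
    filter_upwards [hm.eventually_ne hne] with n hn
    rw [e _ hn]

def Psi (lam : Measure E) (u : E) : ℝ := ∫ h, (1 - Real.cos ⟪u, h⟫) ∂lam

lemma int_prod_cos {lam : Measure E} [SFinite lam]
    (hi : Integrable (fun h : E => min (‖h‖ ^ 2) 1) lam) (v : E) :
    Integrable (fun p : E × E => Real.cos ⟪v, p.2⟫ * (1 - Real.cos ⟪p.1, p.2⟫))
      ((stdGaussian E).prod lam) := by
  refine (int_prod hi).mono' (by fun_prop) (ae_of_all _ fun p => ?_)
  rw [norm_mul, Real.norm_of_nonneg (aux_cos_nonneg _ _)]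
  exact mul_le_of_le_one_left (aux_cos_nonneg _ _) (Real.abs_cos_le_one _)

lemma psi_comb {lam : Measure E}
    (hi : Integrable (fun h : E => min (‖h‖ ^ 2) 1) lam) (v g : E) :
    ∫ h, Real.cos ⟪v, h⟫ * (1 - Real.cos ⟪g, h⟫) ∂lam
      = (1/2) * (Psi lam (v + g) + Psi lam (v - g)) - Psi lam v := by
  unfold Psi
  rw [← integral_add (int_cos hi _) (int_cos hi _), ← integral_const_mul,
    ← integral_sub (by exact ((int_cos hi _).add (int_cos hi _)).const_mul _) (int_cos hi _)]
  congr 1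
  ext h
  rw [inner_add_left, inner_sub_left, Real.cos_add, Real.cos_sub]
  ring

lemma cosq {lam : Measure E} [SFinite lam]
    (hi : Integrable (fun h : E => min (‖h‖ ^ 2) 1) lam) (v : E) :
    ∫ h, (1 - Real.exp (-‖h‖ ^ 2 / 2)) * Real.cos ⟪v, h⟫ ∂lam
      = ∫ g, ((1/2) * (Psi lam (v + g) + Psi lam (v - g)) - Psi lam v) ∂(stdGaussian E) := by
  simp_rw [← psi_comb hi]
  rw [integral_integral_swap (int_prod_cos hi v)]
  simp_rw [integral_const_mul, gauss_one_sub, mul_comm]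

def Mm (lam : Measure E) : Measure E :=
  lam.withDensity fun h => ENNReal.ofReal (1 - Real.exp (-‖h‖ ^ 2 / 2))

lemma Mm_fin {lam : Measure E} (hi : Integrable (fun h : E => min (‖h‖ ^ 2) 1) lam) :
    IsFiniteMeasure (Mm lam) := isFiniteMeasure_withDensity_ofReal (int_q hi).2

lemma Mm_int (lam : Measure E) (f : E → ℝ) :
    ∫ h, f h ∂(Mm lam) = ∫ h, (1 - Real.exp (-‖h‖ ^ 2 / 2)) * f h ∂lam := by
  unfold Mm
  rw [integral_withDensity_eq_integral_toReal_smul (by fun_prop) (by simp)]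
  simp_rw [ENNReal.toReal_ofReal (q_nonneg _), smul_eq_mul]

lemma Mm_char {lam : Measure E} [SFinite lam]
    (hi : Integrable (fun h : E => min (‖h‖ ^ 2) 1) lam)
    (hs : lam.map (fun h => -h) = lam) (v : E) :
    charFun (Mm lam) v = ((∫ g, ((1/2) * (Psi lam (v + g) + Psi lam (v - g)) - Psi lam v)
      ∂(stdGaussian E) : ℝ) : ℂ) := by
  have := Mm_fin hi
  apply Complex.ext
  · rw [charFun_apply, re_int _ _ (by fun_prop), Mm_int, Complex.ofReal_re, ← cosq hi]
    simp_rw [real_inner_comm]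
  · have hi' : Integrable (fun x => Complex.exp ((⟪x, v⟫ : ℂ) * Complex.I)) (Mm lam) := by
      refine (integrable_const (1:ℝ)).mono' (by fun_prop) (ae_of_all _ fun x => ?_)
      rw [Complex.norm_exp_ofReal_mul_I]
    rw [charFun_apply, ← Complex.imCLM_apply, ← Complex.imCLM.integral_comp_comm hi']
    simp only [Complex.imCLM_apply, Complex.exp_ofReal_mul_I_im, Complex.ofReal_im]
    rw [Mm_int]
    set F : E → ℝ := fun h => (1 - Real.exp (-‖h‖ ^ 2 / 2)) * Real.sin ⟪h, v⟫ with hF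
    have h1 : ∫ h, F h ∂lam = - ∫ h, F h ∂lam := by
      conv_lhs => rw [← hs]
      rw [integral_map (by fun_prop) (by fun_prop), ← integral_neg]
      congr 1
      ext h
      simp [hF, inner_neg_left]
    linarith

def dd (s : ℝ) : ℝ := dslope (fun s : ℝ => 1 - Real.exp (-s / 2)) 0 s

lemma dd_deriv : HasDerivAt (fun s : ℝ => 1 - Real.exp (-s / 2)) (1/2) 0 := by
  have h := (((hasDerivAt_id (0:ℝ)).neg.div_const 2).exp).const_sub 1
  have e : -(Real.exp ((-id) (0:ℝ) / 2) * (-1 / 2)) = 1 / 2 := by simp; norm_num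
  rw [e] at h
  exact h

lemma dd_zero : dd 0 = 1 / 2 := by
  unfold dd; rw [dslope_same]; exact dd_deriv.deriv

lemma dd_ne {s : ℝ} (hs : s ≠ 0) : dd s = (1 - Real.exp (-s / 2)) / s := by
  unfold dd; rw [dslope_of_ne _ hs, slope_def_field]; simp

lemma dd_cont : Continuous dd := by
  rw [← continuousOn_univ]
  exact (continuousOn_dslope univ_mem).2 ⟨by fun_prop, dd_deriv.differentiableAt⟩

lemma dd_pos {s : ℝ} (hs : 0 ≤ s) : 1 / 3 ≤ max s 1 * dd s := by
  rcases hs.eq_or_lt with rfl | h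
  · rw [dd_zero]; norm_num
  · rw [dd_ne h.ne', ← mul_div_assoc, le_div_iff₀ h]
    have h1 := aux_min_le s hs
    have : max s 1 * min s 1 = s := by rw [max_mul_min]; simp
    have h2 : 0 ≤ max s 1 := by positivity
    nlinarith

def phi : BoundedContinuousFunction E ℝ :=
  BoundedContinuousFunction.ofNormedAddCommGroup
    (fun y : E => (max (‖y‖ ^ 2) 1 * dd (‖y‖ ^ 2))⁻¹)
    (by
      apply Continuous.inv₀
      · exact (by fun_prop : Continuous fun y : E => max (‖y‖ ^ 2) 1).mul
          (dd_cont.comp (by fun_prop))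
      · intro y
        have := dd_pos (sq_nonneg ‖y‖)
        linarith) 3
    (by
      intro y
      have := dd_pos (sq_nonneg ‖y‖)
      rw [Real.norm_of_nonneg (inv_nonneg.2 (by linarith)), inv_le_comm₀ (by linarith) (by norm_num)]
      linarith)

lemma phi_apply (y : E) :
    (1 - Real.exp (-‖y‖ ^ 2 / 2)) * phi y = min (‖y‖ ^ 2) 1 := by
  change (1 - Real.exp (-‖y‖ ^ 2 / 2)) * (max (‖y‖ ^ 2) 1 * dd (‖y‖ ^ 2))⁻¹ = _
  generalize hs : ‖y‖ ^ 2 = s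
  have h0 : 0 ≤ s := by rw [← hs]; positivity
  have hp := dd_pos h0
  rcases h0.eq_or_lt with rfl | h
  · simp
  · rw [← div_eq_mul_inv, div_eq_iff (by linarith), dd_ne h.ne', ← mul_assoc, min_mul_max]
    field_simp

lemma keyB (lam : ℕ → Measure E) (lam0 : Measure E) [∀ n, SFinite (lam n)] [SFinite lam0]
    (hi : ∀ n, Integrable (fun h : E => min (‖h‖ ^ 2) 1) (lam n))
    (hi0 : Integrable (fun h : E => min (‖h‖ ^ 2) 1) lam0)
    (hs : ∀ n, (lam n).map (fun h => -h) = lam n) (hs0 : lam0.map (fun h => -h) = lam0)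
    (hψ : ∀ u, Tendsto (fun n => Psi (lam n) u) atTop (𝓝 (Psi lam0 u)))
    (K : ℝ) (hK : ∀ᶠ n in atTop, ∀ u, Psi (lam n) u ≤ K * (1 + ‖u‖ ^ 2)) :
    Tendsto (fun n => ∫ h, min (‖h‖ ^ 2) 1 ∂(lam n)) atTop (𝓝 (∫ h, min (‖h‖ ^ 2) 1 ∂lam0)) := by
  have f1 := fun n => Mm_fin (hi n)
  have f2 := Mm_fin hi0
  let MM : ℕ → FiniteMeasure E := fun n => ⟨Mm (lam n), f1 n⟩
  let MM0 : FiniteMeasure E := ⟨Mm lam0, f2⟩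
  have key : Tendsto MM atTop (𝓝 MM0) := by
    apply levyC
    intro v
    simp only [MM, MM0, FiniteMeasure.toMeasure_mk]
    simp_rw [Mm_char (hi _) (hs _), Mm_char hi0 hs0]
    refine (Complex.continuous_ofReal.tendsto _).comp ?_
    have hpos : ∀ n u, 0 ≤ Psi (lam n) u := fun n u => integral_nonneg fun h => aux_cos_nonneg u h
    have hg2 : Integrable (fun g : E => ‖g‖ ^ 2) (stdGaussian E) := by
      refine gauss_int2.mono' (by fun_prop) (ae_of_all _ fun g => ?_)
      rw [Real.norm_of_nonneg (by positivity)]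
      linarith
    apply tendsto_integral_filter_of_dominated_convergence
      (fun g => 2 * K * (1 + 2 * ‖v‖ ^ 2 + 2 * ‖g‖ ^ 2))
    · refine Eventually.of_forall fun n => ?_
      have := (int_prod_cos (hi n) v).integral_prod_left
      simp_rw [psi_comb (hi n)] at this
      exact this.1
    · filter_upwards [hK] with n hn
      refine ae_of_all _ fun g => ?_
      have a1 := hn (v + g)
      have a2 := hn (v - g)
      have a3 := hn v
      have b1 := hpos n (v + g)
      have b2 := hpos n (v - g)
      have b3 := hpos n v
      have c := parallelogram_law_with_norm ℝ v g
      have hK0 : 0 ≤ K := by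
        have := (hpos n 0).trans (hn 0)
        simpa using this
      have d1 : (1/2) * (Psi (lam n) (v + g) + Psi (lam n) (v - g))
          ≤ K * (1 + ‖v‖ ^ 2 + ‖g‖ ^ 2) := by
        have : K * (1 + ‖v‖ ^ 2 + ‖g‖ ^ 2)
          = (1/2) * (K * (1 + ‖v + g‖ ^ 2) + K * (1 + ‖v - g‖ ^ 2)) := by linear_combination (-K/2) * c
        linarith
      rw [Real.norm_eq_abs, abs_le]
      have e1 : 0 ≤ K * ‖v‖ ^ 2 := by positivity
      have e2 : 0 ≤ K * ‖g‖ ^ 2 := by positivity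
      constructor <;> nlinarith
    · exact ((((integrable_const _).add (hg2.const_mul _))).const_mul _)
    · refine ae_of_all _ fun g => ?_
      exact (((hψ _).add (hψ _)).const_mul _).sub (hψ _)
  have := FiniteMeasure.tendsto_iff_forall_integral_tendsto.1 key phi
  simp only [MM, MM0, FiniteMeasure.toMeasure_mk, Mm_int, phi_apply] at this
  exact this

end finB

section hil
variable {H : Type*} [NormedAddCommGroup H] [InnerProductSpace ℝ H] [CompleteSpace H]
    [SecondCountableTopology H] [MeasurableSpace H] [BorelSpace H]

lemma exU : ∃ U : ℕ → Submodule ℝ H, (∀ n, FiniteDimensional ℝ (U n)) ∧ Monotone U ∧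
    ⊤ ≤ (⨆ n, U n).topologicalClosure := by
  refine ⟨fun n => Submodule.span ℝ (TopologicalSpace.denseSeq H '' Set.Iic n), fun n => ?_,
    fun m n h => ?_, ?_⟩
  · exact FiniteDimensional.span_of_finite ℝ ((Set.finite_Iic n).image _)
  · exact Submodule.span_mono (Set.image_mono (Set.Iic_subset_Iic.2 h))
  · intro x _
    have hd := TopologicalSpace.denseRange_denseSeq H
    have hx : x ∈ closure (Set.range (TopologicalSpace.denseSeq H)) := hd x
    refine closure_mono ?_ hx
    rintro _ ⟨n, rfl⟩
    exact (le_iSup (fun n => Submodule.span ℝ (TopologicalSpace.denseSeq H '' Set.Iic n)) n)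
      (Submodule.subset_span ⟨n, Set.mem_Iic.2 le_rfl, rfl⟩)

lemma int_qT (μ : Measure H) [IsProbabilityMeasure μ] (T : H → H) (hT : Measurable T) :
    Integrable (fun x : H => 1 - Real.exp (-‖T x‖ ^ 2 / 2)) μ := by
  refine (integrable_const (1:ℝ)).mono' (Measurable.aestronglyMeasurable (by fun_prop))
    (ae_of_all _ fun x => ?_)
  rw [Real.norm_of_nonneg (q_nonneg _)]
  linarith [Real.exp_pos (-‖T x‖ ^ 2 / 2)]

lemma keyA2 {μ lam : Measure H} [IsProbabilityMeasure μ] [SFinite lam] (hLP : LP μ lam)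
    (hδ : ∫ x, (1 - Real.exp (-‖x‖ ^ 2 / 2)) ∂μ < 1 / 6) :
    ∫ h, (1 - Real.exp (-‖h‖ ^ 2 / 2)) ∂lam ≤ 2 * ∫ x, (1 - Real.exp (-‖x‖ ^ 2 / 2)) ∂μ := by
  obtain ⟨U, hf, hm, hd⟩ := exU (H := H)
  have hmono : ∀ n (x : H), 1 - Real.exp (-‖(U n).orthogonalProjectionOnto x‖ ^ 2 / 2)
      ≤ 1 - Real.exp (-‖x‖ ^ 2 / 2) := by
    intro n x
    have h1 : ‖(U n).orthogonalProjectionOnto x‖ ^ 2 ≤ ‖x‖ ^ 2 := by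
      gcongr; exact (U n).norm_orthogonalProjectionOnto_apply_le x
    have := Real.exp_le_exp.2 (by linarith :
      -‖x‖ ^ 2 / 2 ≤ -‖(U n).orthogonalProjectionOnto x‖ ^ 2 / 2)
    linarith
  have step : ∀ n, ∫ h, (1 - Real.exp (-‖(U n).orthogonalProjectionOnto h‖ ^ 2 / 2)) ∂lam
      ≤ 2 * ∫ x, (1 - Real.exp (-‖x‖ ^ 2 / 2)) ∂μ := by
    intro n
    have hL := hLP.map (U n).orthogonalProjectionOnto
    have : IsProbabilityMeasure (μ.map (U n).orthogonalProjectionOnto) :=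
      Measure.isProbabilityMeasure_map (by fun_prop)
    have hle : ∫ x, (1 - Real.exp (-‖x‖ ^ 2 / 2)) ∂(μ.map (U n).orthogonalProjectionOnto)
        ≤ ∫ x, (1 - Real.exp (-‖x‖ ^ 2 / 2)) ∂μ := by
      rw [integral_map (by fun_prop) (by fun_prop)]
      apply integral_mono _ (int_qT μ id measurable_id) (hmono n)
      exact int_qT μ (U n).starProjection (by fun_prop)
    have := keyA hL (hle.trans_lt hδ)
    rw [integral_map (by fun_prop) (by fun_prop)] at this
    linarith
  refine le_of_tendsto' (f := fun n : ℕ =>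
    ∫ h, (1 - Real.exp (-‖(U n).orthogonalProjectionOnto h‖ ^ 2 / 2)) ∂lam) (x := atTop) ?_ step
  apply tendsto_integral_of_dominated_convergence (fun h : H => 1 - Real.exp (-‖h‖ ^ 2 / 2))
  · intro n; fun_prop
  · exact int_q hLP.1
  · intro n
    refine ae_of_all _ fun x => ?_
    rw [Real.norm_of_nonneg (q_nonneg _)]
    exact hmono n x
  · refine ae_of_all _ fun x => ?_
    have h1 := Submodule.starProjection_tendsto_self U hm x hd
    have h2 := ((by fun_prop : Continuous fun y : H => 1 - Real.exp (-‖y‖ ^ 2 / 2)).tendsto x).comp h1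
    exact h2

lemma tail {μ lam : Measure H} [IsProbabilityMeasure μ] [SFinite lam] (hLP : LP μ lam)
    (T : H →L[ℝ] H) (hδ : ∫ x, (1 - Real.exp (-‖T x‖ ^ 2 / 2)) ∂μ < 1 / 6) :
    ∫ h, min (‖T h‖ ^ 2) 1 ∂lam ≤ 6 * ∫ x, (1 - Real.exp (-‖T x‖ ^ 2 / 2)) ∂μ := by
  have hL := hLP.map T
  have : IsProbabilityMeasure (μ.map T) := Measure.isProbabilityMeasure_map (by fun_prop)
  have e : ∀ ν : Measure H, ∫ x, (1 - Real.exp (-‖x‖ ^ 2 / 2)) ∂(ν.map T)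
      = ∫ x, (1 - Real.exp (-‖T x‖ ^ 2 / 2)) ∂ν := fun ν => by
    rw [integral_map (by fun_prop) (by fun_prop)]
  have h1 := keyA2 hL (by rw [e]; exact hδ)
  have h2 : ∫ h, min (‖h‖ ^ 2) 1 ∂(lam.map T)
      ≤ ∫ h, 3 * (1 - Real.exp (-‖h‖ ^ 2 / 2)) ∂(lam.map T) :=
    integral_mono hL.1 ((int_q hL.1).const_mul _) fun h => aux_min_le _ (sq_nonneg _)
  rw [integral_const_mul] at h2
  rw [integral_map (by fun_prop) (by fun_prop)] at h2
  rw [e μ] at h1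
  linarith

lemma limT (μ : Measure H) [IsProbabilityMeasure μ] (T : ℕ → H →L[ℝ] H)
    (hT : ∀ x, Tendsto (fun k => T k x) atTop (𝓝 0)) :
    Tendsto (fun k => ∫ x, (1 - Real.exp (-‖T k x‖ ^ 2 / 2)) ∂μ) atTop (𝓝 0) := by
  have : (0:ℝ) = ∫ x : H, (0:ℝ) ∂μ := by simp
  rw [this]
  apply tendsto_integral_of_dominated_convergence (fun _ => (1:ℝ))
  · intro n; fun_prop
  · exact integrable_const _
  · intro n
    refine ae_of_all _ fun x => ?_
    rw [Real.norm_of_nonneg (q_nonneg _)]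
    linarith [Real.exp_pos (-‖T n x‖ ^ 2 / 2)]
  · refine ae_of_all _ fun x => ?_
    have h2 := ((by fun_prop : Continuous fun y : H => 1 - Real.exp (-‖y‖ ^ 2 / 2)).tendsto 0).comp
      (hT x)
    simpa [Function.comp_def] using h2

lemma keyB2 {E : Type*} [NormedAddCommGroup E] [InnerProductSpace ℝ E] [FiniteDimensional ℝ E]
    [MeasurableSpace E] [BorelSpace E]
    (lam : ℕ → Measure H) (lam0 : Measure H) [∀ n, SFinite (lam n)] [SFinite lam0]
    (hi : ∀ n, Integrable (fun h : H => min (‖h‖ ^ 2) 1) (lam n))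
    (hi0 : Integrable (fun h : H => min (‖h‖ ^ 2) 1) lam0)
    (hs : ∀ n, (lam n).map (fun h => -h) = lam n) (hs0 : lam0.map (fun h => -h) = lam0)
    (hψ : ∀ u : H, Tendsto (fun n => ∫ h, (1 - Real.cos ⟪u, h⟫) ∂(lam n)) atTop
      (𝓝 (∫ h, (1 - Real.cos ⟪u, h⟫) ∂lam0)))
    (K : ℝ) (hK0 : 0 ≤ K)
    (hK : ∀ᶠ n in atTop, ∀ u, ∫ h, (1 - Real.cos ⟪u, h⟫) ∂(lam n) ≤ K * (1 + ‖u‖ ^ 2))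
    (T : H →L[ℝ] E) :
    Tendsto (fun n => ∫ h, min (‖T h‖ ^ 2) 1 ∂(lam n)) atTop
      (𝓝 (∫ h, min (‖T h‖ ^ 2) 1 ∂lam0)) := by
  have e : ∀ ν : Measure H, ∫ h, min (‖h‖ ^ 2) 1 ∂(ν.map T) = ∫ h, min (‖T h‖ ^ 2) 1 ∂ν :=
    fun ν => by rw [integral_map (by fun_prop) (by fun_prop)]
  have s : ∀ ν : Measure H, ν.map (fun h => -h) = ν →
      (ν.map T).map (fun h => -h) = ν.map T := fun ν h => by
    conv_rhs => rw [← h]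
    rw [Measure.map_map (by fun_prop) (by fun_prop), Measure.map_map (by fun_prop) (by fun_prop)]
    congr 1
    ext x
    simp
  have := keyB (fun n => (lam n).map T) (lam0.map T) (fun n => int_min_map (hi n) T)
    (int_min_map hi0 T) (fun n => s _ (hs n)) (s _ hs0)
    (fun u => by
      unfold Psi
      simp_rw [psi_map]
      exact hψ _) (K * (1 + ‖ContinuousLinearMap.adjoint T‖ ^ 2)) (by
      filter_upwards [hK] with n hn u
      unfold Psi
      rw [psi_map]
      refine (hn _).trans ?_
      rw [mul_assoc]
      gcongr
      have h1 : ‖ContinuousLinearMap.adjoint T u‖ ^ 2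
          ≤ ‖ContinuousLinearMap.adjoint T‖ ^ 2 * ‖u‖ ^ 2 := by
        rw [← mul_pow]; gcongr; exact ContinuousLinearMap.le_opNorm _ u
      nlinarith [sq_nonneg ‖u‖, sq_nonneg ‖ContinuousLinearMap.adjoint T‖])
  simpa only [e] using this

lemma proj_diff {lam : Measure H} (hi : Integrable (fun h : H => min (‖h‖ ^ 2) 1) lam)
    (U : Submodule ℝ H) [FiniteDimensional ℝ U] :
    |∫ h, min (‖h‖ ^ 2) 1 ∂lam - ∫ h, min (‖U.orthogonalProjectionOnto h‖ ^ 2) 1 ∂lam|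
      ≤ ∫ h, min (‖Uᗮ.starProjection h‖ ^ 2) 1 ∂lam := by
  have i1 : Integrable (fun h => min (‖U.orthogonalProjectionOnto h‖ ^ 2) 1) lam := by
    have := int_min_map hi U.orthogonalProjectionOnto
    rw [integrable_map_measure (by fun_prop) (by fun_prop)] at this
    exact this
  have i2 : Integrable (fun h => min (‖Uᗮ.starProjection h‖ ^ 2) 1) lam := by
    have := int_min_map hi Uᗮ.starProjection
    rw [integrable_map_measure (by fun_prop) (by fun_prop)] at this
    exact this
  rw [← integral_sub hi i1]
  refine (abs_integral_le_integral_abs).trans ?_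
  apply integral_mono (hi.sub i1).abs i2
  intro h
  have e : ‖h‖ ^ 2 = ‖U.orthogonalProjectionOnto h‖ ^ 2 + ‖Uᗮ.starProjection h‖ ^ 2 :=
    U.norm_sq_eq_add_norm_sq_starProjection h
  change |min (‖h‖ ^ 2) 1 - min (‖U.orthogonalProjectionOnto h‖ ^ 2) 1|
    ≤ min (‖Uᗮ.starProjection h‖ ^ 2) 1
  rw [e]
  have a0 := sq_nonneg ‖U.orthogonalProjectionOnto h‖
  have b0 := sq_nonneg ‖Uᗮ.starProjection h‖
  generalize ‖U.orthogonalProjectionOnto h‖ ^ 2 = a at *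
  generalize ‖Uᗮ.starProjection h‖ ^ 2 = b at *
  rw [abs_le]
  constructor <;> grind

lemma lint_conv {lam : Measure H} (hint : ∫⁻ h, min ((‖h‖₊ : ENNReal) ^ 2) 1 ∂lam < ⊤) :
    Integrable (fun h : H => min (‖h‖ ^ 2) 1) lam ∧
    ∫⁻ h, min ((‖h‖₊ : ENNReal) ^ 2) 1 ∂lam = ENNReal.ofReal (∫ h, min (‖h‖ ^ 2) 1 ∂lam) := by
  have e : ∀ h : H, min ((‖h‖₊ : ENNReal) ^ 2) 1 = ENNReal.ofReal (min (‖h‖ ^ 2) 1) := fun h => by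
    rw [ENNReal.ofReal_min, ENNReal.ofReal_pow (norm_nonneg _), ofReal_norm, ENNReal.ofReal_one]
    rfl
  simp_rw [e] at hint ⊢
  have hi : Integrable (fun h : H => min (‖h‖ ^ 2) 1) lam := by
    refine ⟨by fun_prop, ?_⟩
    rw [hasFiniteIntegral_iff_ofReal (ae_of_all _ fun h => by positivity)]
    exact hint
  exact ⟨hi, (ofReal_integral_eq_lintegral_ofReal hi (ae_of_all _ fun h => by positivity)).symm⟩

lemma LP_of {μ lam : Measure H} [IsProbabilityMeasure μ]
    (hi : Integrable (fun h : H => min (‖h‖ ^ 2) 1) lam)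
    (hchar : ∀ u : H, ∫ x, Complex.exp (⟪u, x⟫ * Complex.I) ∂μ
        = Complex.exp (-(∫ h, (1 - Real.cos ⟪u, h⟫) ∂lam : ℝ))) : LP μ lam := by
  refine ⟨hi, fun u => ?_⟩
  rw [← re_int _ _ (by fun_prop), hchar, ← Complex.ofReal_neg, Complex.exp_ofReal_re]

end hil

/-- Let `H` be a separable Hilbert space and `(λ_n)` a sequence of symmetric
Lévy measures on `H` such that the infinitely divisible measures `μ_n` with characteristics
`(0,0,λ_n)` converge weakly to an infinitely divisible measure `μ` with characteristics
`(0,0,λ)`.  Then `∫_H (‖h‖² ∧ 1) λ_n(dh) → ∫_H (‖h‖² ∧ 1) λ(dh)`. -/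
theorem stmt0
    {H : Type} [NormedAddCommGroup H] [InnerProductSpace ℝ H] [CompleteSpace H]
    [SecondCountableTopology H] [MeasurableSpace H] [BorelSpace H]
    (lam : ℕ → Measure H) (lamLim : Measure H)
    (μ : ℕ → Measure H) (μLim : Measure H)
    (hP : ∀ n, IsProbabilityMeasure (μ n)) (hP' : IsProbabilityMeasure μLim)
    -- `λ_n` and `λ` are Lévy measures:
    (hσ : ∀ n, SigmaFinite (lam n)) (hσ' : SigmaFinite lamLim)
    (h0 : ∀ n, lam n {0} = 0) (h0' : lamLim {0} = 0)
    (hint : ∀ n, ∫⁻ h, min ((‖h‖₊ : ENNReal) ^ 2) 1 ∂(lam n) < ⊤)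
    (hint' : ∫⁻ h, min ((‖h‖₊ : ENNReal) ^ 2) 1 ∂lamLim < ⊤)
    -- the Lévy measures are symmetric:
    (hsym : ∀ n, (lam n).map (fun h => -h) = lam n)
    (hsym' : lamLim.map (fun h => -h) = lamLim)
    -- `μ_n` is infinitely divisible with characteristics `(0,0,λ_n)`; by symmetry its
    -- characteristic function is `exp(-∫ (1 - cos⟨u,h⟩) λ_n(dh))`:
    (hchar : ∀ n (u : H),
      ∫ x, Complex.exp (⟪u, x⟫ * Complex.I) ∂(μ n)
        = Complex.exp (-(∫ h, (1 - Real.cos ⟪u, h⟫) ∂(lam n) : ℝ)))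
    (hchar' : ∀ u : H,
      ∫ x, Complex.exp (⟪u, x⟫ * Complex.I) ∂μLim
        = Complex.exp (-(∫ h, (1 - Real.cos ⟪u, h⟫) ∂lamLim : ℝ)))
    -- `μ_n` converges weakly to `μ`:
    (hweak : ∀ f : BoundedContinuousFunction H ℝ,
      Tendsto (fun n => ∫ x, f x ∂(μ n)) atTop (𝓝 (∫ x, f x ∂μLim))) :
    Tendsto (fun n => ∫⁻ h, min ((‖h‖₊ : ENNReal) ^ 2) 1 ∂(lam n)) atTop
      (𝓝 (∫⁻ h, min ((‖h‖₊ : ENNReal) ^ 2) 1 ∂lamLim)) := by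
  have hi := fun n => (lint_conv (hint n)).1
  have hi0 := (lint_conv hint').1
  have hLP := fun n => LP_of (hi n) (hchar n)
  have hLP0 := LP_of hi0 hchar'
  simp_rw [fun n => (lint_conv (hint n)).2, (lint_conv hint').2]
  refine (ENNReal.continuous_ofReal.tendsto _).comp ?_
  have hψ : ∀ u : H, Tendsto (fun n => ∫ h, (1 - Real.cos ⟪u, h⟫) ∂(lam n)) atTop
      (𝓝 (∫ h, (1 - Real.cos ⟪u, h⟫) ∂lamLim)) := by
    intro u
    have h1 := hweak (BoundedContinuousFunction.ofNormedAddCommGroup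
      (fun x : H => Real.cos ⟪u, x⟫) (by fun_prop) 1 (fun x => by
        rw [Real.norm_eq_abs]; exact Real.abs_cos_le_one _))
    simp only [BoundedContinuousFunction.coe_ofNormedAddCommGroup] at h1
    simp_rw [fun n => (hLP n).2 u, hLP0.2 u] at h1
    have h2 := (h1.log (Real.exp_ne_zero _)).neg
    simpa only [Real.log_exp, neg_neg] using h2
  have hw : ∀ T : H →L[ℝ] H, Tendsto (fun n => ∫ x, (1 - Real.exp (-‖T x‖ ^ 2 / 2)) ∂(μ n)) atTop
      (𝓝 (∫ x, (1 - Real.exp (-‖T x‖ ^ 2 / 2)) ∂μLim)) := by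
    intro T
    have h1 := hweak (BoundedContinuousFunction.ofNormedAddCommGroup
      (fun x : H => 1 - Real.exp (-‖T x‖ ^ 2 / 2)) (by fun_prop) 1 (fun x => by
        rw [Real.norm_of_nonneg (q_nonneg _)]
        linarith [Real.exp_pos (-‖T x‖ ^ 2 / 2)]))
    simpa only [BoundedContinuousFunction.coe_ofNormedAddCommGroup] using h1
  obtain ⟨K, hK0, hK⟩ : ∃ K : ℝ, 0 ≤ K ∧ ∀ᶠ n in atTop, ∀ u : H,
      ∫ h, (1 - Real.cos ⟪u, h⟫) ∂(lam n) ≤ K * (1 + ‖u‖ ^ 2) := by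
    have h1 := limT μLim (fun k : ℕ => (1 / ((k : ℝ) + 1)) • ContinuousLinearMap.id ℝ H)
      (fun x => by
        have := (tendsto_one_div_add_atTop_nhds_zero_nat (𝕜 := ℝ)).smul_const x
        simpa using this)
    obtain ⟨k, hk⟩ := (h1.eventually_lt_const (by norm_num : (0:ℝ) < 1 / 6)).exists
    set c : ℝ := 1 / ((k : ℝ) + 1) with hc
    have hc0 : 0 < c := by positivity
    refine ⟨2 + c⁻¹ ^ 2, by positivity, ?_⟩
    filter_upwards [(hw (c • ContinuousLinearMap.id ℝ H)).eventually_lt_const hk] with n hn u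
    have h2 := tail (hLP n) _ hn
    have i2 : Integrable (fun h => min (‖(c • ContinuousLinearMap.id ℝ H) h‖ ^ 2) 1) (lam n) := by
      have := int_min_map (hi n) (c • ContinuousLinearMap.id ℝ H)
      rw [integrable_map_measure (by fun_prop) (by fun_prop)] at this
      exact this
    have h3 : ∫ h, (1 - Real.cos ⟪u, h⟫) ∂(lam n)
        ≤ ∫ h, (2 + ‖c⁻¹ • u‖ ^ 2) * min (‖(c • ContinuousLinearMap.id ℝ H) h‖ ^ 2) 1 ∂(lam n) := by
      refine integral_mono (int_cos (hi n) u) (i2.const_mul _) fun h => ?_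
      have h4 := aux_cos_le (c⁻¹ • u) (c • h)
      have h5 : ⟪c⁻¹ • u, c • h⟫ = ⟪u, h⟫ := by
        rw [real_inner_smul_left, real_inner_smul_right, inv_mul_cancel_left₀ hc0.ne']
      rw [h5] at h4
      exact h4
    rw [integral_const_mul] at h3
    have h6 : ‖c⁻¹ • u‖ ^ 2 = c⁻¹ ^ 2 * ‖u‖ ^ 2 := by
      rw [norm_smul, mul_pow, Real.norm_eq_abs, sq_abs]
    rw [h6] at h3
    have h7 : ∫ h, min (‖(c • ContinuousLinearMap.id ℝ H) h‖ ^ 2) 1 ∂(lam n) ≤ 1 := by linarith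
    have h8 : 0 ≤ c⁻¹ ^ 2 * ‖u‖ ^ 2 := by positivity
    have h9 := mul_le_mul_of_nonneg_left h7 (by positivity : 0 ≤ 2 + c⁻¹ ^ 2 * ‖u‖ ^ 2)
    nlinarith [sq_nonneg c⁻¹, sq_nonneg ‖u‖]
  obtain ⟨U, hf, hm, hd⟩ := exU (H := H)
  have hT := limT μLim (fun N => (U N)ᗮ.starProjection) (fun x => by
    have h1 := Submodule.starProjection_tendsto_self U hm x hd
    have h2 := (tendsto_const_nhds (x := x)).sub h1
    rw [sub_self] at h2
    refine h2.congr fun N => ?_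
    have := (U N).starProjection_add_starProjection_orthogonal x
    rw [sub_eq_iff_eq_add]
    rw [add_comm]
    exact this.symm)
  rw [Metric.tendsto_atTop']
  intro ε hε
  set η := min (1 / 6) (ε / 14) with hη
  have hη0 : 0 < η := by positivity
  have hη1 : η ≤ 1 / 6 := min_le_left _ _
  have hη2 : η ≤ ε / 14 := min_le_right _ _
  obtain ⟨N, hN⟩ := (hT.eventually_lt_const hη0).exists
  have e1 := (hw (U N)ᗮ.starProjection).eventually_lt_const hN
  have e2 := keyB2 lam lamLim hi hi0 hsym hsym' hψ K hK0 hK (U N).orthogonalProjectionOnto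
  have e3 := (Metric.tendsto_nhds.1 e2) η hη0
  have p0 := proj_diff hi0 (U N)
  have t0 := tail hLP0 _ (hN.trans_le hη1)
  obtain ⟨M, hM⟩ := eventually_atTop.1 (e1.and e3)
  refine ⟨M, fun n hn => ?_⟩
  obtain ⟨a1, a2⟩ := hM n hn.le
  have p1 := proj_diff (hi n) (U N)
  have t1 := tail (hLP n) _ (a1.trans_le hη1)
  rw [Real.dist_eq, abs_lt] at a2
  rw [Real.dist_eq, abs_lt]
  rw [abs_le] at p0 p1
  obtain ⟨p2, p3⟩ := p0
  obtain ⟨p4, p5⟩ := p1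
  constructor <;> linarith [a2.1, a2.2]
end
end

section
/- Let X : G → L⁰_P(Ω,ℝ) be a cylindrical random variable on a separable Hilbert space G, and (F_n) a sequence of Hilbert–Schmidt operators G → H converging to F in the Hilbert–Schmidt norm. Then the sequence of Radonified random variables (F_n X) converges in probability in H to FX. -/
open MeasureTheory Filter Topology RealInnerProductSpace

noncomputable section
open ProbabilityTheory in
lemma aux_gauss_cross {ι : Type} [Fintype ι] [DecidableEq ι] (i j : ι) :
    Integrable (fun x : EuclideanSpace ℝ ι => x i * x j) (stdGaussian (EuclideanSpace ℝ ι)) ∧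
    ∫ x : EuclideanSpace ℝ ι, x i * x j ∂(stdGaussian (EuclideanSpace ℝ ι)) =
      if i = j then 1 else 0 := by
  have hm : MemLp id 2 (stdGaussian (EuclideanSpace ℝ ι)) := IsGaussian.memLp_two_id
  have hmi : ∀ i, MemLp (fun x : EuclideanSpace ℝ ι => x i) 2
      (stdGaussian (EuclideanSpace ℝ ι)) := fun i =>
    (EuclideanSpace.proj i : EuclideanSpace ℝ ι →L[ℝ] ℝ).comp_memLp' hm
  refine ⟨(hmi i).integrable_mul (hmi j), ?_⟩
  have h := covarianceBilin_apply hm (EuclideanSpace.single i (1:ℝ)) (EuclideanSpace.single j (1:ℝ))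
  rw [covarianceBilin_stdGaussian] at h
  simp only [id, integral_id_stdGaussian, sub_zero] at h
  simp [EuclideanSpace.inner_single_left] at h
  rw [← h]
  erw [innerSL_apply_apply]
  simp [EuclideanSpace.inner_single_left]

open ProbabilityTheory in
lemma aux_gauss_sq {ι : Type} [Fintype ι] {G : Type} [NormedAddCommGroup G]
    [InnerProductSpace ℝ G] (v : ι → G) :
    Integrable (fun x : EuclideanSpace ℝ ι => ‖∑ i, x i • v i‖ ^ 2)
      (stdGaussian (EuclideanSpace ℝ ι)) ∧
    ∫ x : EuclideanSpace ℝ ι, ‖∑ i, x i • v i‖ ^ 2 ∂(stdGaussian (EuclideanSpace ℝ ι)) =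
      ∑ i, ‖v i‖ ^ 2 := by
  classical
  have h : ∀ x : EuclideanSpace ℝ ι, ‖∑ i, x i • v i‖ ^ 2 =
      ∑ i, ∑ j, (x i * x j) * ⟪v i, v j⟫ := by
    intro x
    rw [← real_inner_self_eq_norm_sq, sum_inner]
    refine Finset.sum_congr rfl fun i _ => ?_
    rw [inner_sum]
    refine Finset.sum_congr rfl fun j _ => ?_
    rw [real_inner_smul_left, real_inner_smul_right]; ring
  simp_rw [h]
  have hi : ∀ i j, Integrable (fun x : EuclideanSpace ℝ ι => (x i * x j) * ⟪v i, v j⟫)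
      (stdGaussian (EuclideanSpace ℝ ι)) := fun i j => (aux_gauss_cross i j).1.mul_const _
  refine ⟨integrable_finsetSum _ fun i _ => integrable_finsetSum _ fun j _ => hi i j, ?_⟩
  rw [integral_finsetSum _ fun i _ => integrable_finsetSum _ fun j _ => hi i j]
  refine Finset.sum_congr rfl fun i _ => ?_
  rw [integral_finsetSum _ fun j _ => hi i j]
  simp_rw [integral_mul_const, (aux_gauss_cross _ _).2]
  simp

open ProbabilityTheory in
lemma aux_gauss_cos {E : Type} [NormedAddCommGroup E] [InnerProductSpace ℝ E]
    [FiniteDimensional ℝ E] [MeasurableSpace E] [BorelSpace E] (t : E) :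
    ∫ x : E, (1 - Real.cos ⟪t, x⟫) ∂(stdGaussian E) = 1 - Real.exp (-‖t‖ ^ 2 / 2) := by
  have h := charFun_stdGaussian t
  rw [charFun_apply] at h
  have h2 := congrArg Complex.re h
  have hint : Integrable (fun x : E => Complex.exp (⟪x, t⟫ * Complex.I)) (stdGaussian E) := by
    refine Integrable.of_bound (C := 1) (by fun_prop) (ae_of_all _ fun x => ?_)
    rw [Complex.norm_exp_ofReal_mul_I]
  have h3 : ∫ x : E, Real.cos ⟪t, x⟫ ∂(stdGaussian E) = Real.exp (-‖t‖ ^ 2 / 2) := by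
    have := integral_re hint
    simp only [RCLike.re_to_complex] at this
    rw [h2] at this
    simp only [Complex.exp_ofReal_mul_I_re] at this
    simp_rw [real_inner_comm _ t]
    rw [this]
    norm_cast
  rw [integral_sub (integrable_const _), h3]
  · simp
  · refine Integrable.of_bound (C := 1) (by fun_prop) (ae_of_all _ fun x => ?_)
    exact Real.abs_cos_le_one _

open ProbabilityTheory in
lemma aux_core {ι : Type} [Fintype ι] {G : Type} [NormedAddCommGroup G]
    [InnerProductSpace ℝ G] (v : ι → G) {Ω : Type} [MeasurableSpace Ω]
    (P : Measure Ω) [IsProbabilityMeasure P] (d : Ω → EuclideanSpace ℝ ι) (hd : Measurable d)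
    (η C : ℝ)
    (h : ∀ x : EuclideanSpace ℝ ι, ∫ ω, (1 - Real.cos ⟪d ω, x⟫) ∂P ≤
      η + C * ‖∑ i, x i • v i‖ ^ 2) :
    ∫ ω, (1 - Real.exp (-‖d ω‖ ^ 2 / 2)) ∂P ≤ η + C * ∑ i, ‖v i‖ ^ 2 := by
  obtain ⟨h1, h2⟩ := aux_gauss_sq v
  simp_rw [← aux_gauss_cos]
  have hint : Integrable (Function.uncurry fun (ω : Ω) (x : EuclideanSpace ℝ ι) =>
      (1 - Real.cos ⟪d ω, x⟫)) (P.prod (stdGaussian (EuclideanSpace ℝ ι))) := by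
    refine Integrable.of_bound (C := 2) ?_ (ae_of_all _ fun x => ?_)
    · apply Measurable.aestronglyMeasurable
      unfold Function.uncurry
      fun_prop
    · simp only [Function.uncurry, Real.norm_eq_abs, abs_le]
      constructor <;> linarith [Real.neg_one_le_cos ⟪d x.1, x.2⟫, Real.cos_le_one ⟪d x.1, x.2⟫]
  rw [integral_integral_swap hint]
  calc _ ≤ ∫ x : EuclideanSpace ℝ ι, (η + C * ‖∑ i, x i • v i‖ ^ 2)
        ∂(stdGaussian (EuclideanSpace ℝ ι)) :=
        integral_mono hint.integral_prod_right ((integrable_const _).add (h1.const_mul _)) h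
    _ = _ := by
      rw [integral_add (integrable_const _) (h1.const_mul _), integral_const_mul, h2]
      simp

lemma aux_cont {G : Type} [NormedAddCommGroup G] 
    {Ω : Type} [MeasurableSpace Ω] (P : Measure Ω) [IsProbabilityMeasure P]
    (X : G → Ω → ℝ) (hXmeas : ∀ g, Measurable (X g))
    (h0 : ∀ᵐ ω ∂P, X 0 ω = 0)
    (hcont : ∀ (g : ℕ → G) (g₀ : G), Tendsto g atTop (𝓝 g₀) →
      TendstoInMeasure P (fun n => X (g n)) atTop (X g₀)) (η : ℝ) (hη : 0 < η) :
    ∃ C, ∀ g, ∫ ω, (1 - Real.cos (X g ω)) ∂P ≤ η + C * ‖g‖ ^ 2 := by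
  have ht : Tendsto (fun g => ∫ ω, (1 - Real.cos (X g ω)) ∂P) (𝓝 0) (𝓝 0) := by
    refine tendsto_of_seq_tendsto fun u hu => ?_
    refine tendsto_of_subseq_tendsto fun ns hns => ?_
    obtain ⟨ms, hms, hae⟩ := (hcont _ _ (hu.comp hns)).exists_seq_tendsto_ae
    refine ⟨ms, ?_⟩
    have : (0:ℝ) = ∫ ω, (0:ℝ) ∂P := by simp
    rw [this]
    refine tendsto_integral_of_dominated_convergence (fun _ => 2) ?_ (integrable_const _) ?_ ?_
    · intro n
      have := hXmeas (u (ns (ms n)))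
      exact Measurable.aestronglyMeasurable (by fun_prop)
    · refine fun n => ae_of_all _ fun ω => ?_
      rw [Real.norm_eq_abs, abs_le]
      constructor <;> linarith [Real.neg_one_le_cos (X (u (ns (ms n))) ω),
        Real.cos_le_one (X (u (ns (ms n))) ω)]
    · filter_upwards [hae, h0] with ω h1 h2
      have h3 := ((Real.continuous_cos.tendsto _).comp h1).const_sub 1
      rw [h2] at h3
      simpa using h3
  obtain ⟨δ, hδ, hb⟩ := Metric.eventually_nhds_iff.1 (ht.eventually (gt_mem_nhds hη))
  refine ⟨2 / δ ^ 2, fun g => ?_⟩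
  by_cases hg : ‖g‖ < δ
  · have := hb (by simpa using hg)
    have h2 : 0 ≤ 2 / δ ^ 2 * ‖g‖ ^ 2 := by positivity
    linarith
  · push Not at hg
    have h1 : ∫ ω, (1 - Real.cos (X g ω)) ∂P ≤ ∫ ω, (2:ℝ) ∂P := by
      refine integral_mono_of_nonneg (ae_of_all _ fun ω => ?_) (integrable_const _)
        (ae_of_all _ fun ω => ?_)
      · simp [Real.cos_le_one]
      · simp only; linarith [Real.neg_one_le_cos (X g ω)]
    have h2 : 2 ≤ 2 / δ ^ 2 * ‖g‖ ^ 2 := by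
      rw [div_mul_eq_mul_div, le_div_iff₀ (by positivity)]
      gcongr
    simp at h1
    linarith

lemma aux_countable {H : Type} [NormedAddCommGroup H] [InnerProductSpace ℝ H]
    [SecondCountableTopology H] {ι : Type} (b : ι → H) (hb : Orthonormal ℝ b) : Countable ι := by
  have : (Set.univ : Set ι).PairwiseDisjoint (fun i => Metric.ball (b i) (1/2)) := by
    intro i _ j _ hij
    apply Metric.ball_disjoint_ball
    have h : ‖b i - b j‖ ^ 2 = 2 := by
      rw [norm_sub_sq_real, hb.1 i, hb.1 j, hb.2 hij]; norm_num
    rw [dist_eq_norm]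
    nlinarith [norm_nonneg (b i - b j)]
  have := this.countable_of_isOpen (fun i _ => Metric.isOpen_ball) (fun i _ => by simp)
  exact Set.countable_univ_iff.1 this

lemma aux_hasSum_congr {ι : Type} {f g : ι → ℝ} {a : ℝ} (h : HasSum g a)
    (e : ∀ i, f i = g i) : HasSum f a := by
  rw [funext e]; exact h

lemma aux_hs {G : Type} [NormedAddCommGroup G] [InnerProductSpace ℝ G] [CompleteSpace G]
    {H : Type} [NormedAddCommGroup H] [InnerProductSpace ℝ H] [CompleteSpace H]
    (bG : HilbertBasis ℕ ℝ G) (T : G →L[ℝ] H) (hT : Summable fun i => ‖T (bG i)‖ ^ 2)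
    {κ : Type} (b : κ → H) (hb : Orthonormal ℝ b) (J : Finset κ) :
    ∑ i ∈ J, ‖ContinuousLinearMap.adjoint T (b i)‖ ^ 2 ≤ ∑' i, ‖T (bG i)‖ ^ 2 := by
  have h : ∀ i, HasSum (fun j => ‖⟪b i, T (bG j)⟫‖ ^ 2)
      (‖ContinuousLinearMap.adjoint T (b i)‖ ^ 2) := by
    intro i
    have := bG.hasSum_inner_mul_inner (ContinuousLinearMap.adjoint T (b i))
      (ContinuousLinearMap.adjoint T (b i))
    rw [real_inner_self_eq_norm_sq] at this
    refine aux_hasSum_congr this fun j => ?_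
    rw [real_inner_comm _ (bG j), ContinuousLinearMap.adjoint_inner_left, Real.norm_eq_abs, sq_abs,
      sq]
  have h2 := hasSum_sum (s := J) fun i _ => h i
  exact hasSum_le (fun j => hb.sum_inner_products_le (T (bG j))) h2 hT.hasSum

lemma aux_bound {G : Type} [NormedAddCommGroup G] [InnerProductSpace ℝ G] [CompleteSpace G]
    {H : Type} [NormedAddCommGroup H] [InnerProductSpace ℝ H] [CompleteSpace H]
    [MeasurableSpace H] [BorelSpace H] [SecondCountableTopology H]
    {Ω : Type} [MeasurableSpace Ω] (P : Measure Ω) [IsProbabilityMeasure P]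
    (bG : HilbertBasis ℕ ℝ G) (X : G → Ω → ℝ) (η C : ℝ) (hC : 0 ≤ C)
    (hX : ∀ g, ∫ ω, (1 - Real.cos (X g ω)) ∂P ≤ η + C * ‖g‖ ^ 2)
    (T : G →L[ℝ] H) (hT : Summable fun i => ‖T (bG i)‖ ^ 2)
    (D : Ω → H) (hD : Measurable D)
    (hDX : ∀ h : H, ∀ᵐ ω ∂P, ⟪D ω, h⟫ = X ((ContinuousLinearMap.adjoint T) h) ω) :
    ∫ ω, (1 - Real.exp (-‖D ω‖ ^ 2 / 2)) ∂P ≤ η + C * ∑' i, ‖T (bG i)‖ ^ 2 := by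
  obtain ⟨w, b, -⟩ := exists_hilbertBasis ℝ H
  have : Countable w := aux_countable b b.orthonormal
  have key : ∀ J : Finset w, ∫ ω, (1 - Real.exp (-(∑ i ∈ J, ⟪D ω, b i⟫ ^ 2) / 2)) ∂P ≤
      η + C * ∑' i, ‖T (bG i)‖ ^ 2 := by
    intro J
    have h1 := aux_core (ι := J) (fun i => ContinuousLinearMap.adjoint T (b i)) P
      (fun ω => WithLp.toLp 2 fun i : J => ⟪D ω, b i⟫) (by fun_prop) η C (by
        intro x
        have e : ∑ i : J, x i • ContinuousLinearMap.adjoint T (b i) = ContinuousLinearMap.adjoint T (∑ i : J, x i • b i) := by simp [map_sum]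
        rw [e]
        refine le_trans (le_of_eq ?_) (hX _)
        refine integral_congr_ae ?_
        filter_upwards [hDX (∑ i : J, x i • b i)] with ω hω
        rw [← hω, inner_sum]
        simp [PiLp.inner_apply, real_inner_smul_right])
    simp only [EuclideanSpace.real_norm_sq_eq] at h1
    rw [Finset.sum_coe_sort J (fun i => ‖ContinuousLinearMap.adjoint T (b i)‖ ^ 2)] at h1
    simp_rw [fun ω => Finset.sum_coe_sort J (fun i => ⟪D ω, b i⟫ ^ 2)] at h1
    refine h1.trans ?_
    gcongr
    exact aux_hs bG T hT b b.orthonormal J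
  refine le_of_tendsto' (x := (atTop : Filter (Finset w))) ?_ key
  refine tendsto_integral_filter_of_dominated_convergence (fun _ => 1) ?_ ?_ (integrable_const _) ?_
  · exact Eventually.of_forall fun J => Measurable.aestronglyMeasurable (by fun_prop)
  · refine Eventually.of_forall fun J => ae_of_all _ fun ω => ?_
    have h1 : Real.exp (-(∑ i ∈ J, ⟪D ω, b i⟫ ^ 2) / 2) ≤ 1 := by
      apply Real.exp_le_one_iff.2
      have : 0 ≤ ∑ i ∈ J, ⟪D ω, b i⟫ ^ 2 := Finset.sum_nonneg fun i _ => sq_nonneg _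
      linarith
    rw [Real.norm_eq_abs, abs_le]
    constructor <;> linarith [Real.exp_pos (-(∑ i ∈ J, ⟪D ω, b i⟫ ^ 2) / 2)]
  · refine ae_of_all _ fun ω => ?_
    have := b.hasSum_inner_mul_inner (D ω) (D ω)
    rw [real_inner_self_eq_norm_sq] at this
    have h2 : HasSum (fun i => ⟪D ω, b i⟫ ^ 2) (‖D ω‖ ^ 2) := by
      refine aux_hasSum_congr this fun i => ?_
      rw [real_inner_comm (D ω), sq]
    exact ((Real.continuous_exp.tendsto _).comp ((Tendsto.neg h2).div_const 2)).const_sub 1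

theorem stmt6
    {G : Type} [NormedAddCommGroup G] [InnerProductSpace ℝ G] [CompleteSpace G]
    {H : Type} [NormedAddCommGroup H] [InnerProductSpace ℝ H] [CompleteSpace H]
    [MeasurableSpace H] [BorelSpace H] [SecondCountableTopology H]
    {Ω : Type} [MeasurableSpace Ω]
    (P : Measure Ω) (hP : IsProbabilityMeasure P)
    (bG : HilbertBasis ℕ ℝ G)
    -- `X` is a cylindrical random variable, i.e. a linear continuous map into `L⁰_P(Ω,ℝ)`:
    (X : G → Ω → ℝ)
    (hXmeas : ∀ g, Measurable (X g))
    (hadd : ∀ g g', ∀ᵐ ω ∂P, X (g + g') ω = X g ω + X g' ω)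
    (hsmul : ∀ (c : ℝ) (g : G), ∀ᵐ ω ∂P, X (c • g) ω = c * X g ω)
    (hcont : ∀ (g : ℕ → G) (g₀ : G), Tendsto g atTop (𝓝 g₀) →
      TendstoInMeasure P (fun n => X (g n)) atTop (X g₀))
    -- `(F_n)` are Hilbert–Schmidt operators converging to `F₀` in Hilbert–Schmidt norm:
    (F : ℕ → (G →L[ℝ] H)) (F₀ : G →L[ℝ] H)
    (hHSn : ∀ n, Summable fun i => ‖F n (bG i)‖ ^ 2)
    (hHS0 : Summable fun i => ‖F₀ (bG i)‖ ^ 2)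
    (hHSd : ∀ n, Summable fun i => ‖(F n - F₀) (bG i)‖ ^ 2)
    (hconv : Tendsto (fun n => ∑' i, ‖(F n - F₀) (bG i)‖ ^ 2) atTop (𝓝 0))
    -- `Y n` Radonifies `F_n X` and `Y₀` Radonifies `F₀ X`:
    (Y : ℕ → Ω → H) (Y₀ : Ω → H)
    (hYmeas : ∀ n, Measurable (Y n)) (hY₀meas : Measurable Y₀)
    (hY : ∀ n (h : H), ∀ᵐ ω ∂P,
      ⟪Y n ω, h⟫ = X ((ContinuousLinearMap.adjoint (F n)) h) ω)
    (hY₀ : ∀ h : H, ∀ᵐ ω ∂P,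
      ⟪Y₀ ω, h⟫ = X ((ContinuousLinearMap.adjoint F₀) h) ω) :
    TendstoInMeasure P Y atTop Y₀ := by
  have h0 : ∀ᵐ ω ∂P, X 0 ω = 0 := by
    filter_upwards [hsmul 0 0] with ω hω
    simpa using hω
  have hD : ∀ n (h : H), ∀ᵐ ω ∂P,
      ⟪Y n ω - Y₀ ω, h⟫ = X ((ContinuousLinearMap.adjoint (F n - F₀)) h) ω := by
    intro n h
    filter_upwards [hY n h, hY₀ h, hadd ((ContinuousLinearMap.adjoint (F n - F₀)) h)
      ((ContinuousLinearMap.adjoint F₀) h)] with ω h1 h2 h3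
    have e : (ContinuousLinearMap.adjoint (F n - F₀)) h + (ContinuousLinearMap.adjoint F₀) h =
      (ContinuousLinearMap.adjoint (F n)) h := by simp
    rw [e] at h3
    rw [inner_sub_left, h1, h2, h3]; ring
  have hDm : ∀ n, Measurable fun ω => Y n ω - Y₀ ω := fun n => (hYmeas n).sub hY₀meas
  have hnn : ∀ x : H, 0 ≤ 1 - Real.exp (-‖x‖ ^ 2 / 2) := by
    intro x
    have : Real.exp (-‖x‖ ^ 2 / 2) ≤ 1 := Real.exp_le_one_iff.2 (by nlinarith [sq_nonneg ‖x‖])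
    linarith
  have hlim : Tendsto (fun n => ∫ ω, (1 - Real.exp (-‖Y n ω - Y₀ ω‖ ^ 2 / 2)) ∂P) atTop (𝓝 0) := by
    rw [Metric.tendsto_atTop']
    intro ε hε
    obtain ⟨C, hC⟩ := aux_cont P X hXmeas h0 hcont (ε / 2) (by positivity)
    have hC' : ∀ g, ∫ ω, (1 - Real.cos (X g ω)) ∂P ≤ ε / 2 + |C| * ‖g‖ ^ 2 := fun g =>
      (hC g).trans (by gcongr; exact le_abs_self C)
    have h1 := fun n => aux_bound P bG X (ε / 2) |C| (abs_nonneg C) hC' (F n - F₀) (hHSd n) _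
      (hDm n) (hD n)
    have h2 := (hconv.const_mul |C|).const_add (ε / 2)
    simp only [mul_zero, add_zero] at h2
    obtain ⟨N, hN⟩ := eventually_atTop.1 (h2.eventually (gt_mem_nhds (half_lt_self hε)))
    refine ⟨N, fun n hn => ?_⟩
    rw [Real.dist_eq, sub_zero, abs_of_nonneg (integral_nonneg fun ω => hnn _)]
    exact (h1 n).trans_lt (hN n hn.le)
  rw [tendstoInMeasure_iff_measureReal_norm]
  intro ε hε
  have hc : 0 < 1 - Real.exp (-ε ^ 2 / 2) := by
    have : Real.exp (-ε ^ 2 / 2) < 1 := Real.exp_lt_one_iff.2 (by nlinarith [sq_pos_of_pos hε])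
    linarith
  have h3 := hlim.div_const (1 - Real.exp (-ε ^ 2 / 2))
  rw [zero_div] at h3
  refine squeeze_zero (fun n => measureReal_nonneg) (fun n => ?_) h3
  rw [le_div_iff₀ hc, mul_comm]
  refine le_trans ?_ (mul_meas_ge_le_integral_of_nonneg (ae_of_all _ fun ω => hnn _) ?_
    (1 - Real.exp (-ε ^ 2 / 2)))
  · refine mul_le_mul_of_nonneg_left (measureReal_mono fun ω hω => ?_) hc.le
    simp only [Set.mem_setOf_eq] at hω ⊢
    have h4 : ε ^ 2 ≤ ‖Y n ω - Y₀ ω‖ ^ 2 := by gcongr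
    have h5 : Real.exp (-‖Y n ω - Y₀ ω‖ ^ 2 / 2) ≤ Real.exp (-ε ^ 2 / 2) :=
      Real.exp_le_exp.2 (by linarith)
    linarith
  · refine Integrable.of_bound (C := 1) ?_ (ae_of_all _ fun ω => ?_)
    · have := hDm n
      exact Measurable.aestronglyMeasurable (by fun_prop)
    · rw [Real.norm_eq_abs, abs_of_nonneg (hnn _)]
      linarith [Real.exp_pos (-‖Y n ω - Y₀ ω‖ ^ 2 / 2)]
end
end

section
/- Let α ∈ (0,2), p ∈ (0,α), and L the canonical α-stable cylindrical Lévy process on G. For every step function ψ ∈ S^HS_det and every operator-valued step function γ with sup_t ‖γ(t)‖_{H→H} ≤ 1, the stochastic integral satisfies E[‖∫₀^T γψ dL‖^p] ≤ c_{α,p} (∫₀^T ‖ψ(t)‖_HS^α dt)^{p/α}, and consequently sup_{γ ∈ S^{1,op}_det} P(‖∫₀^T γψ dL‖ > ε) ≤ ε^{−p} c_{α,p} ‖ψ‖_{L^α}^p. -/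
open MeasureTheory Filter Topology RealInnerProductSpace
noncomputable section
open ProbabilityTheory


abbrev gpi (κ : Type) [Fintype κ] : Measure (κ → ℝ) := Measure.pi (fun _ : κ => gaussianReal 0 1)

lemma gpi_char {κ : Type} [Fintype κ] (a : κ → ℝ) :
    ∫ g, Complex.exp ((∑ k, g k * a k : ℝ) * Complex.I) ∂(gpi κ)
      = Complex.exp (-((∑ k, a k ^ 2) / 2 : ℝ)) := by
  have h : ∀ g : κ → ℝ, Complex.exp ((∑ k, g k * a k : ℝ) * Complex.I)
      = ∏ k, Complex.exp ((a k : ℂ) * (g k : ℂ) * Complex.I) := by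
    intro g
    rw [← Complex.exp_sum]
    congr 1
    push_cast
    rw [Finset.sum_mul]
    exact Finset.sum_congr rfl (fun i _ => by ring)
  simp_rw [h]
  rw [integral_fintype_prod_eq_prod (f := fun k (x : ℝ) => Complex.exp ((a k : ℂ) * (x : ℂ) * Complex.I))]
  simp_rw [← charFun_apply_real, charFun_gaussianReal, ← Complex.exp_sum]
  congr 1
  push_cast
  rw [Finset.sum_div, ← Finset.sum_neg_distrib]
  exact Finset.sum_congr rfl (fun i _ => by simp)

lemma gauss_sq_s8 : ∫ x, x ^ 2 ∂(gaussianReal 0 1) = 1 := by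
  have := variance_id_gaussianReal (μ := 0) (v := 1)
  rw [variance_eq_integral (by fun_prop)] at this
  simpa using this

lemma gauss_memLp : MemLp (fun x : ℝ => x) 2 (gaussianReal 0 1) := IsGaussian.memLp_two_id

lemma gpi_mul_int {κ : Type} [Fintype κ] (k l : κ) :
    Integrable (fun g => g k * g l) (gpi κ) := by
  have h : ∀ k : κ, MemLp (fun g : κ → ℝ => g k) 2 (gpi κ) := fun k =>
    gauss_memLp.comp_measurePreserving (measurePreserving_eval (fun _ : κ => gaussianReal 0 1) k)
  exact (h k).integrable_mul (h l)

lemma gpi_mul {κ : Type} [Fintype κ] [DecidableEq κ] (k l : κ) :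
    ∫ g, g k * g l ∂(gpi κ) = if k = l then 1 else 0 := by
  split_ifs with h
  · subst h
    rw [integral_comp_eval (μ := fun _ : κ => gaussianReal 0 1) (i := k) (f := fun x : ℝ => x * x)
      (by fun_prop)]
    simpa [pow_two] using gauss_sq_s8
  · have := (iIndepFun_pi (μ := fun _ : κ => gaussianReal 0 1) (X := fun _ (x : ℝ) => x)
      (fun _ => by fun_prop)).indepFun h
    have h2 := this.integral_mul_eq_mul_integral
      (measurable_pi_apply k).aestronglyMeasurable (measurable_pi_apply l).aestronglyMeasurable
    rw [integral_comp_eval (μ := fun _ : κ => gaussianReal 0 1) (i := k) (f := fun x : ℝ => x)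
      (by fun_prop)] at h2
    simpa using h2

lemma gpi_norm_sq {κ : Type} [Fintype κ] {E : Type} [NormedAddCommGroup E] [InnerProductSpace ℝ E]
    (v : κ → E) : Integrable (fun g => ‖∑ k, g k • v k‖ ^ 2) (gpi κ) ∧
      ∫ g, ‖∑ k, g k • v k‖ ^ 2 ∂(gpi κ) = ∑ k, ‖v k‖ ^ 2 := by
  classical
  have h : ∀ g : κ → ℝ, ‖∑ k, g k • v k‖ ^ 2 = ∑ k, ∑ l, (g k * g l) * ⟪v k, v l⟫ := by
    intro g
    rw [← real_inner_self_eq_norm_sq, sum_inner]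
    refine Finset.sum_congr rfl fun k _ => ?_
    rw [inner_sum]
    refine Finset.sum_congr rfl fun l _ => ?_
    rw [real_inner_smul_left, real_inner_smul_right]; ring
  simp_rw [h]
  have hi : ∀ k l, Integrable (fun g : κ → ℝ => (g k * g l) * ⟪v k, v l⟫) (gpi κ) :=
    fun k l => (gpi_mul_int k l).mul_const _
  refine ⟨integrable_finsetSum _ fun k _ => integrable_finsetSum _ fun l _ => hi k l, ?_⟩
  rw [integral_finsetSum _ fun k _ => integrable_finsetSum _ fun l _ => hi k l]
  refine Finset.sum_congr rfl fun k _ => ?_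
  rw [integral_finsetSum _ fun l _ => hi k l]
  simp_rw [integral_mul_const, gpi_mul]
  simp

lemma gpi_norm_rpow {κ : Type} [Fintype κ] {E : Type} [NormedAddCommGroup E]
    [InnerProductSpace ℝ E] (v : κ → E) (α : ℝ) (hα : 0 < α) (hα2 : α < 2) :
    Integrable (fun g => ‖∑ k, g k • v k‖ ^ α) (gpi κ) ∧
      ∫ g, ‖∑ k, g k • v k‖ ^ α ∂(gpi κ) ≤ (∑ k, ‖v k‖ ^ 2) ^ (α / 2) := by
  obtain ⟨h1, h2⟩ := gpi_norm_sq v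
  have e : ∀ g : κ → ℝ, ‖∑ k, g k • v k‖ ^ α = (‖∑ k, g k • v k‖ ^ 2) ^ (α / 2) := by
    intro g
    rw [← Real.rpow_natCast, ← Real.rpow_mul (norm_nonneg _)]
    congr 1; push_cast; ring
  have hi : Integrable (fun g => (‖∑ k, g k • v k‖ ^ 2) ^ (α / 2)) (gpi κ) := by
    refine (h1.add (integrable_const (1:ℝ))).mono' ?_ (ae_of_all _ fun g => ?_)
    · refine Continuous.aestronglyMeasurable ?_
      refine Continuous.rpow_const (by fun_prop) (fun _ => Or.inr (by positivity))
    · rw [Real.norm_of_nonneg (by positivity)]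
      simp only [Pi.add_apply]
      set x := ‖∑ k, g k • v k‖ ^ 2
      have hx : 0 ≤ x := by positivity
      rcases le_total x 1 with h | h
      · have := Real.rpow_le_one hx h (show 0 ≤ α / 2 by positivity)
        linarith
      · have := Real.rpow_le_rpow_of_exponent_le h (show α / 2 ≤ 1 by linarith)
        rw [Real.rpow_one] at this
        linarith
  simp_rw [e]
  refine ⟨hi, ?_⟩
  rw [← h2]
  exact (Real.concaveOn_rpow (show 0 ≤ α / 2 by positivity) (by linarith)).le_map_integral
    (Real.continuous_rpow_const (by positivity)).continuousOn isClosed_Ici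
    (ae_of_all _ fun g => by simp only [Set.mem_Ici]; positivity) h1 hi

lemma core_gauss {G : Type} [NormedAddCommGroup G] [InnerProductSpace ℝ G] [CompleteSpace G]
    {H : Type} [NormedAddCommGroup H] [InnerProductSpace ℝ H] [CompleteSpace H]
    [MeasurableSpace H] [BorelSpace H] [SecondCountableTopology H]
    {Ω : Type} [MeasurableSpace Ω] (P : Measure Ω) [IsProbabilityMeasure P]
    (α : ℝ) (hα : 0 < α) (hα2 : α < 2) {B : Type} [Fintype B] (w : B → ℝ) (hw : ∀ b, 0 ≤ w b)
    (R : B → (G →L[ℝ] H)) (X : Ω → H) (hX : Measurable X)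
    (hchar : ∀ u : H, ∫ ω, Complex.exp (⟪u, X ω⟫ * Complex.I) ∂P
      = Complex.exp (-(∑ b, w b * ‖(ContinuousLinearMap.adjoint (R b)) u‖ ^ α : ℝ)))
    {κ : Type} [Fintype κ] (e : κ → H) :
    1 - ∫ ω, Real.exp (-((∑ k, ⟪e k, X ω⟫ ^ 2) / 2)) ∂P
      ≤ ∑ b, w b * (∑ k, ‖(ContinuousLinearMap.adjoint (R b)) (e k)‖ ^ 2) ^ (α / 2) := by
  set Q : (κ → ℝ) → ℝ := fun g =>
    ∑ b, w b * ‖∑ k, g k • (ContinuousLinearMap.adjoint (R b)) (e k)‖ ^ α with hQ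
  have hQ0 : ∀ g, 0 ≤ Q g := fun g => Finset.sum_nonneg fun b _ => mul_nonneg (hw b) (by positivity)
  have hQi : Integrable Q (gpi κ) := integrable_finsetSum _ fun b _ =>
    (gpi_norm_rpow _ α hα hα2).1.const_mul _
  have hQle : ∫ g, Q g ∂(gpi κ)
      ≤ ∑ b, w b * (∑ k, ‖(ContinuousLinearMap.adjoint (R b)) (e k)‖ ^ 2) ^ (α / 2) := by
    rw [integral_finsetSum _ fun b _ => (gpi_norm_rpow _ α hα hα2).1.const_mul _]
    refine Finset.sum_le_sum fun b _ => ?_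
    rw [integral_const_mul]
    exact mul_le_mul_of_nonneg_left (gpi_norm_rpow _ α hα hα2).2 (hw b)
  have h1 : ∀ g : κ → ℝ, ∫ ω, Complex.exp ((∑ k, g k * ⟪e k, X ω⟫ : ℝ) * Complex.I) ∂P
      = ((Real.exp (-(Q g)) : ℝ) : ℂ) := by
    intro g
    have := hchar (∑ k, g k • e k)
    simp_rw [sum_inner, real_inner_smul_left, map_sum, map_smul] at this
    rw [this, hQ, Complex.ofReal_exp, Complex.ofReal_neg]
  have hmeas : Measurable (fun z : (κ → ℝ) × Ω => (∑ k, z.1 k * ⟪e k, X z.2⟫ : ℝ)) := by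
    refine Finset.measurable_sum _ fun k _ => Measurable.mul ?_ ?_
    · exact (measurable_pi_apply k).comp measurable_fst
    · exact (Measurable.inner measurable_const hX).comp measurable_snd
  have hint : Integrable (fun z : (κ → ℝ) × Ω =>
      Complex.exp ((∑ k, z.1 k * ⟪e k, X z.2⟫ : ℝ) * Complex.I)) ((gpi κ).prod P) := by
    refine Integrable.of_bound (C := 1) ?_ (ae_of_all _ fun z => ?_)
    · exact (Complex.measurable_exp.comp
        ((Complex.measurable_ofReal.comp hmeas).mul_const _)).aestronglyMeasurable
    · rw [Complex.norm_exp_ofReal_mul_I]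
  have hswap := integral_integral_swap (f := fun (g : κ → ℝ) (ω : Ω) =>
    Complex.exp ((∑ k, g k * ⟪e k, X ω⟫ : ℝ) * Complex.I)) hint
  simp_rw [h1, gpi_char] at hswap
  have hs2 : ∫ g, Real.exp (-(Q g)) ∂(gpi κ)
      = ∫ ω, Real.exp (-((∑ k, ⟪e k, X ω⟫ ^ 2) / 2)) ∂P := by
    have e1 : ∀ ω, Complex.exp (-((((∑ k, ⟪e k, X ω⟫ ^ 2) / 2 : ℝ)) : ℂ))
      = ((Real.exp (-((∑ k, ⟪e k, X ω⟫ ^ 2) / 2)) : ℝ) : ℂ) := fun ω => by push_cast; rfl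
    simp_rw [e1, integral_complex_ofReal] at hswap
    exact_mod_cast hswap
  rw [← hs2]
  refine le_trans ?_ hQle
  have hi2 : Integrable (fun g => Real.exp (-(Q g))) (gpi κ) := by
    refine Integrable.of_bound (C := 1) ?_ (ae_of_all _ fun g => ?_)
    · exact Real.continuous_exp.comp_aestronglyMeasurable hQi.aestronglyMeasurable.neg
    · rw [Real.norm_of_nonneg (Real.exp_nonneg _)]
      exact Real.exp_le_one_iff.2 (by linarith [hQ0 g])
  have : ∫ g, (1 - Q g) ∂(gpi κ) ≤ ∫ g, Real.exp (-(Q g)) ∂(gpi κ) := by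
    refine integral_mono ((integrable_const _).sub hQi) hi2 fun g => ?_
    have := Real.add_one_le_exp (-(Q g))
    simp only; linarith
  rw [integral_sub (integrable_const _) hQi] at this
  simp at this
  linarith

lemma hs_le {G : Type} [NormedAddCommGroup G] [InnerProductSpace ℝ G] [CompleteSpace G]
    {H : Type} [NormedAddCommGroup H] [InnerProductSpace ℝ H] [CompleteSpace H]
    (bG : HilbertBasis ℕ ℝ G) (Φ : G →L[ℝ] H) (γ : H →L[ℝ] H) (hγ : ‖γ‖ ≤ 1)
    (hs : Summable fun k => ‖Φ (bG k)‖ ^ 2) {ι : Type} {e : ι → H} (he : Orthonormal ℝ e)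
    (S : Finset ι) :
    ∑ k ∈ S, ‖(ContinuousLinearMap.adjoint (γ.comp Φ)) (e k)‖ ^ 2 ≤ ∑' j, ‖Φ (bG j)‖ ^ 2 := by
  have h1 : ∀ k, HasSum (fun j => ⟪e k, γ (Φ (bG j))⟫ ^ 2)
      (‖(ContinuousLinearMap.adjoint (γ.comp Φ)) (e k)‖ ^ 2) := by
    intro k
    have := bG.hasSum_inner_mul_inner ((ContinuousLinearMap.adjoint (γ.comp Φ)) (e k))
      ((ContinuousLinearMap.adjoint (γ.comp Φ)) (e k))
    rw [real_inner_self_eq_norm_sq] at this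
    refine Eq.mpr (congrArg (fun f => HasSum f _) (funext fun j => ?_)) this
    rw [ContinuousLinearMap.adjoint_inner_left, ContinuousLinearMap.adjoint_inner_right,
      real_inner_comm (e k), pow_two]
    rfl
  have h2 := hasSum_sum (s := S) fun k _ => h1 k
  refine hasSum_le (fun j => ?_) h2 hs.hasSum
  have h3 := he.sum_inner_products_le (γ (Φ (bG j))) (s := S)
  simp only [Real.norm_eq_abs, sq_abs] at h3
  refine h3.trans ?_
  gcongr
  calc _ ≤ ‖γ‖ * ‖Φ (bG j)‖ := γ.le_opNorm _
    _ ≤ 1 * _ := by gcongr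
    _ = _ := one_mul _

lemma orthonormal_countable {H : Type} [NormedAddCommGroup H] [InnerProductSpace ℝ H]
    [SecondCountableTopology H] {ι : Type} {e : ι → H} (he : Orthonormal ℝ e) : Countable ι := by
  refine Pairwise.countable_of_isOpen_disjoint (s := fun i => Metric.ball (e i) (1/2)) ?_
    (fun i => Metric.isOpen_ball) (fun i => ⟨e i, by simp⟩)
  intro i j hij
  refine Metric.ball_disjoint_ball ?_
  have h1 : ‖e i - e j‖ ^ 2 = 2 := by
    rw [norm_sub_sq_real, he.1 i, he.1 j, he.2 hij]; norm_num
  rw [dist_eq_norm]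
  nlinarith [norm_nonneg (e i - e j)]

lemma exp_bound {G : Type} [NormedAddCommGroup G] [InnerProductSpace ℝ G] [CompleteSpace G]
    {H : Type} [NormedAddCommGroup H] [InnerProductSpace ℝ H] [CompleteSpace H]
    [MeasurableSpace H] [BorelSpace H] [SecondCountableTopology H]
    {Ω : Type} [MeasurableSpace Ω] (P : Measure Ω) [IsProbabilityMeasure P]
    (bG : HilbertBasis ℕ ℝ G)
    (α : ℝ) (hα : 0 < α) (hα2 : α < 2) {B : Type} [Fintype B] (w : B → ℝ) (hw : ∀ b, 0 ≤ w b)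
    (Φ : B → (G →L[ℝ] H)) (γ : B → (H →L[ℝ] H)) (hγ : ∀ b, ‖γ b‖ ≤ 1)
    (hs : ∀ b, Summable fun k => ‖Φ b (bG k)‖ ^ 2) (X : Ω → H) (hX : Measurable X)
    (hchar : ∀ u : H, ∫ ω, Complex.exp (⟪u, X ω⟫ * Complex.I) ∂P
      = Complex.exp (-(∑ b, w b *
        ‖(ContinuousLinearMap.adjoint ((γ b).comp (Φ b))) u‖ ^ α : ℝ)))
    (s : ℝ) (hs0 : 0 < s) :
    1 - ∫ ω, Real.exp (-(s ^ 2 * ‖X ω‖ ^ 2 / 2)) ∂P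
      ≤ s ^ α * ∑ b, w b * (∑' j, ‖Φ b (bG j)‖ ^ 2) ^ (α / 2) := by
  obtain ⟨W, bH, -⟩ := exists_hilbertBasis ℝ H
  have hW : Countable W := orthonormal_countable bH.orthonormal
  have key : ∀ S : Finset W, 1 - ∫ ω, Real.exp (-(s ^ 2 * (∑ k ∈ S, ⟪bH k, X ω⟫ ^ 2) / 2)) ∂P
      ≤ s ^ α * ∑ b, w b * (∑' j, ‖Φ b (bG j)‖ ^ 2) ^ (α / 2) := by
    intro S
    have h := core_gauss P α hα hα2 w hw (fun b => (γ b).comp (Φ b)) X hX hchar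
      (fun k : S => s • bH k)
    simp_rw [real_inner_smul_left, mul_pow, ← Finset.mul_sum, map_smul, norm_smul, mul_pow,
      ← Finset.mul_sum] at h
    have e1 : ∀ ω, ∑ k : S, ⟪bH k, X ω⟫ ^ 2 = ∑ k ∈ S, ⟪bH k, X ω⟫ ^ 2 := fun ω =>
      Finset.sum_coe_sort S (fun k => ⟪bH k, X ω⟫ ^ 2)
    simp_rw [e1] at h
    refine h.trans ?_
    rw [Finset.mul_sum]
    refine Finset.sum_le_sum fun b _ => ?_
    rw [mul_left_comm]
    refine mul_le_mul_of_nonneg_left ?_ (hw b)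
    rw [Real.mul_rpow (by positivity) (by positivity), Real.norm_of_nonneg hs0.le,
      ← Real.rpow_natCast, ← Real.rpow_mul hs0.le]
    have : ((2:ℕ):ℝ) * (α / 2) = α := by push_cast; ring
    rw [this]
    refine mul_le_mul_of_nonneg_left ?_ (by positivity)
    refine Real.rpow_le_rpow (by positivity) ?_ (by positivity)
    rw [Finset.sum_coe_sort S
      (fun k => ‖(ContinuousLinearMap.adjoint ((γ b).comp (Φ b))) (bH k)‖ ^ 2)]
    exact hs_le bG _ _ (hγ b) (hs b) bH.orthonormal S
  have hlim : Tendsto (fun S : Finset W =>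
      ∫ ω, Real.exp (-(s ^ 2 * (∑ k ∈ S, ⟪bH k, X ω⟫ ^ 2) / 2)) ∂P) atTop
      (𝓝 (∫ ω, Real.exp (-(s ^ 2 * ‖X ω‖ ^ 2 / 2)) ∂P)) := by
    refine tendsto_integral_filter_of_dominated_convergence (fun _ => (1:ℝ))
      (Eventually.of_forall fun S => ?_) (Eventually.of_forall fun S => ae_of_all _ fun ω => ?_)
      (integrable_const _) (ae_of_all _ fun ω => ?_)
    · have : Measurable fun ω => ∑ k ∈ S, ⟪bH k, X ω⟫ ^ 2 :=
        Finset.measurable_sum _ fun k _ => (Measurable.inner measurable_const hX).pow_const 2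
      exact (Real.measurable_exp.comp ((this.const_mul _).div_const _).neg).aestronglyMeasurable
    · rw [Real.norm_of_nonneg (Real.exp_nonneg _)]
      refine Real.exp_le_one_iff.2 ?_
      rw [neg_nonpos]
      have : 0 ≤ ∑ k ∈ S, ⟪bH k, X ω⟫ ^ 2 := Finset.sum_nonneg fun k _ => sq_nonneg _
      positivity
    · have h1 := bH.hasSum_inner_mul_inner (X ω) (X ω)
      rw [real_inner_self_eq_norm_sq] at h1
      have h2 : HasSum (fun k => ⟪bH k, X ω⟫ ^ 2) (‖X ω‖ ^ 2) := by
        refine Eq.mpr (congrArg (fun f => HasSum f _) (funext fun k => ?_)) h1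
        rw [real_inner_comm (bH k), pow_two]
      exact (Real.continuous_exp.tendsto _).comp (((h2.const_mul _).div_const _).neg)
  exact le_of_tendsto (tendsto_const_nhds.sub hlim) (Eventually.of_forall key)

lemma tail_bound {H : Type} [NormedAddCommGroup H] 
    [MeasurableSpace H] [BorelSpace H]
    {Ω : Type} [MeasurableSpace Ω] (P : Measure Ω) [IsProbabilityMeasure P]
    (α A : ℝ) (X : Ω → H) (hX : Measurable X)
    (h : ∀ s : ℝ, 0 < s → 1 - ∫ ω, Real.exp (-(s ^ 2 * ‖X ω‖ ^ 2 / 2)) ∂P ≤ s ^ α * A)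
    (r : ℝ) (hr : 0 < r) :
    P {ω | r ≤ ‖X ω‖} ≤ ENNReal.ofReal ((1 - Real.exp (-(1/2)))⁻¹ * A * r ^ (-α)) := by
  have hK : 0 < 1 - Real.exp (-(1/2)) := by
    have : Real.exp (-(1/2)) < 1 := Real.exp_lt_one_iff.2 (by norm_num)
    linarith
  have hs := h r⁻¹ (by positivity)
  set f : Ω → ℝ := fun ω => Real.exp (-(r⁻¹ ^ 2 * ‖X ω‖ ^ 2 / 2)) with hf
  have hle : ∀ ω, f ω ≤ 1 := fun ω => Real.exp_le_one_iff.2 (by rw [neg_nonpos]; positivity)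
  have hfi : Integrable f P := by
    refine Integrable.of_bound (C := 1) ?_ (ae_of_all _ fun ω => ?_)
    · have := hX.norm
      exact (Real.measurable_exp.comp
        (((this.pow_const 2).const_mul _).div_const _).neg).aestronglyMeasurable
    · rw [Real.norm_of_nonneg (Real.exp_nonneg _)]
      exact hle ω
  have hm := mul_meas_ge_le_integral_of_nonneg (μ := P) (f := fun ω => 1 - f ω)
    (ae_of_all _ fun ω => by simpa using hle ω) ((integrable_const _).sub hfi)
    (1 - Real.exp (-(1/2)))
  rw [integral_sub (integrable_const _) hfi] at hm
  simp only [integral_const, probReal_univ, smul_eq_mul, mul_one] at hm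
  have hsub : {ω | r ≤ ‖X ω‖} ⊆ {ω | 1 - Real.exp (-(1/2)) ≤ 1 - f ω} := by
    intro ω hω
    simp only [Set.mem_ofPred_eq] at hω ⊢
    have : f ω ≤ Real.exp (-(1/2)) := by
      refine Real.exp_le_exp.2 ?_
      have h1 : 1 ≤ r⁻¹ * ‖X ω‖ := by
        rw [inv_mul_eq_div, one_le_div hr]; exact hω
      rw [← mul_pow]
      nlinarith
    linarith
  rw [← ofReal_measureReal]
  refine ENNReal.ofReal_le_ofReal ?_
  have h2 : P.real {ω | r ≤ ‖X ω‖} ≤ P.real {ω | 1 - Real.exp (-(1/2)) ≤ 1 - f ω} :=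
    measureReal_mono hsub
  rw [mul_assoc, ← div_eq_inv_mul, le_div_iff₀ hK, mul_comm A, Real.rpow_neg hr.le,
    ← Real.inv_rpow hr.le]
  have h3 := mul_le_mul_of_nonneg_left h2 hK.le
  linarith

lemma moment_bound {Ω : Type} [MeasurableSpace Ω] (P : Measure Ω) [IsProbabilityMeasure P]
    (α p K A : ℝ) (hp : 0 < p) (hpα : p < α) (hK : 0 < K) (hA : 0 ≤ A)
    (f : Ω → ℝ) (hf0 : ∀ ω, 0 ≤ f ω) (hf : Measurable f)
    (h : ∀ r : ℝ, 0 < r → P {ω | r ≤ f ω} ≤ ENNReal.ofReal (K * A * r ^ (-α))) :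
    ∫⁻ ω, ENNReal.ofReal (f ω ^ p) ∂P
      ≤ ENNReal.ofReal ((1 + p * K / (α - p)) * A ^ (p / α)) := by
  have hα : 0 < α := hp.trans hpα
  have hap : 0 < α - p := by linarith
  have key : ∀ A' ∈ Set.Ioi A, ∫⁻ ω, ENNReal.ofReal (f ω ^ p) ∂P
      ≤ ENNReal.ofReal ((1 + p * K / (α - p)) * A' ^ (p / α)) := by
    intro A' hA'
    have hA'0 : 0 < A' := lt_of_le_of_lt hA hA'
    set R := A' ^ (1 / α) with hR
    have hR0 : 0 < R := by positivity
    rw [lintegral_rpow_eq_lintegral_meas_le_mul P (ae_of_all _ hf0) hf.aemeasurable hp,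
      ← Set.Ioc_union_Ioi_eq_Ioi hR0.le]
    have i1 : ∫⁻ t in Set.Ioc 0 R, P {a | t ≤ f a} * ENNReal.ofReal (t ^ (p - 1))
        ≤ ENNReal.ofReal (R ^ p / p) := by
      have hii : IntervalIntegrable (fun t : ℝ => t ^ (p - 1)) volume 0 R :=
        intervalIntegral.intervalIntegrable_rpow' (by linarith)
      have : R ^ p / p = ∫ t in Set.Ioc 0 R, t ^ (p - 1) := by
        rw [← intervalIntegral.integral_of_le hR0.le, integral_rpow (Or.inl (by linarith))]
        simp [Real.zero_rpow hp.ne']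
      rw [this, ofReal_integral_eq_lintegral_ofReal
        ((intervalIntegrable_iff_integrableOn_Ioc_of_le hR0.le).1 hii)]
      · refine lintegral_mono fun t => ?_
        calc _ ≤ 1 * ENNReal.ofReal (t ^ (p - 1)) := by gcongr; exact prob_le_one
          _ = _ := one_mul _
      · exact (ae_restrict_iff' measurableSet_Ioc).2 (ae_of_all _ fun t ht =>
          Real.rpow_nonneg ht.1.le _)
    have i2 : ∫⁻ t in Set.Ioi R, P {a | t ≤ f a} * ENNReal.ofReal (t ^ (p - 1))
        ≤ ENNReal.ofReal (K * A' * (R ^ (p - α) / (α - p))) := by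
      have hlt : p - 1 - α < -1 := by linarith
      have : K * A' * (R ^ (p - α) / (α - p)) = ∫ t in Set.Ioi R, K * A' * t ^ (p - 1 - α) := by
        rw [integral_const_mul, integral_Ioi_rpow_of_lt hlt hR0]
        congr 1
        rw [show p - 1 - α + 1 = -(α - p) by ring, show p - α = -(α - p) by ring, div_neg, neg_div,
          neg_neg]
      rw [this, ofReal_integral_eq_lintegral_ofReal
        ((integrableOn_Ioi_rpow_of_lt hlt hR0).const_mul _)]
      · refine setLIntegral_mono' measurableSet_Ioi fun t ht => ?_
        have ht0 : 0 < t := hR0.trans ht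
        calc _ ≤ ENNReal.ofReal (K * A * t ^ (-α)) * ENNReal.ofReal (t ^ (p - 1)) := by
              gcongr; exact h t ht0
          _ = ENNReal.ofReal (K * A * t ^ (p - 1 - α)) := by
              rw [← ENNReal.ofReal_mul (by positivity), mul_assoc, ← Real.rpow_add ht0]
              congr 3; ring
          _ ≤ _ := by
              refine ENNReal.ofReal_le_ofReal ?_
              have : A ≤ A' := le_of_lt hA'
              gcongr
      · exact (ae_restrict_iff' measurableSet_Ioi).2 (ae_of_all _ fun t ht => by
          have : 0 < t := hR0.trans ht
          simp only [Pi.zero_apply]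
          positivity)
    calc _ ≤ ENNReal.ofReal p * (ENNReal.ofReal (R ^ p / p)
              + ENNReal.ofReal (K * A' * (R ^ (p - α) / (α - p)))) := by
            gcongr
            exact (lintegral_union_le _ _ _).trans (add_le_add i1 i2)
      _ = ENNReal.ofReal (p * (R ^ p / p + K * A' * (R ^ (p - α) / (α - p)))) := by
            rw [← ENNReal.ofReal_add (by positivity) (by positivity), ← ENNReal.ofReal_mul hp.le]
      _ = _ := by
            congr 1
            have e1 : R ^ p = A' ^ (p / α) := by
              rw [hR, ← Real.rpow_mul hA'0.le]; congr 1; ring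
            have e2 : A' * R ^ (p - α) = A' ^ (p / α) := by
              rw [hR, ← Real.rpow_mul hA'0.le]
              nth_rewrite 1 [← Real.rpow_one A']
              rw [← Real.rpow_add hA'0]; congr 1; field_simp; ring
            rw [← e1] at e2 ⊢
            have : p * (R ^ p / p + K * A' * (R ^ (p - α) / (α - p)))
              = R ^ p + p * K * (A' * R ^ (p - α)) / (α - p) := by field_simp
            rw [this, e2]; field_simp
  have hlim : Tendsto (fun A' : ℝ => ENNReal.ofReal ((1 + p * K / (α - p)) * A' ^ (p / α)))
      (𝓝[>] A) (𝓝 (ENNReal.ofReal ((1 + p * K / (α - p)) * A ^ (p / α)))) := by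
    refine Tendsto.mono_left ?_ nhdsWithin_le_nhds
    refine ENNReal.tendsto_ofReal (Tendsto.const_mul _ ?_)
    exact (Real.continuous_rpow_const (show 0 ≤ p / α by positivity)).tendsto A
  exact ge_of_tendsto hlim (eventually_mem_nhdsWithin.mono key)

lemma integral_factor {B : Type} [Fintype B] [MeasurableSpace B] [MeasurableSingletonClass B]
    (T : ℝ) (q : ℝ → B) (hq : Measurable q) (F : B → ℝ) (f : ℝ → ℝ)
    (hf : ∀ t ∈ Set.Ioc 0 T, f t = F (q t)) :
    ∫ t in Set.Ioc 0 T, f t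
      = ∑ b, ((volume.restrict (Set.Ioc 0 T)).map q).real {b} * F b := by
  rw [setIntegral_congr_fun measurableSet_Ioc hf]
  have hfin : IsFiniteMeasure ((volume.restrict (Set.Ioc 0 T)).map q) := inferInstance
  have := integral_fintype (f := F) (μ := (volume.restrict (Set.Ioc 0 T)).map q)
    Integrable.of_finite
  rw [integral_map hq.aemeasurable Integrable.of_finite.aestronglyMeasurable] at this
  simpa using this

lemma meas_dec (a b : ℝ) [∀ t : ℝ, Decidable (t ∈ Set.Ioc a b)] :
    Measurable (fun t : ℝ => decide (t ∈ Set.Ioc a b)) := by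
  refine measurable_to_bool ?_
  have : (fun t : ℝ => decide (t ∈ Set.Ioc a b)) ⁻¹' {true} = Set.Ioc a b := by
    ext t; simp
  rw [this]
  exact measurableSet_Ioc

/-- Let `α ∈ (0,2)`, `p ∈ (0,α)` and `L` the canonical `α`-stable cylindrical
Lévy process on `G`.  For every step function `ψ ∈ S^HS_det` and every operator-valued step
function `γ` with `sup_t ‖γ(t)‖ ≤ 1`, the stochastic integral `X = ∫₀^T γψ dL` (a random
variable with characteristic function `exp(-∫₀^T ‖(γ(t)ψ(t))* u‖^α dt)`) satisfies
`E[‖X‖^p] ≤ c_{α,p} (∫₀^T ‖ψ(t)‖_HS^α dt)^{p/α}` and consequently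
`P(‖X‖ > ε) ≤ ε^{-p} c_{α,p} (∫₀^T ‖ψ(t)‖_HS^α dt)^{p/α}`. -/
theorem stmt8
    {G : Type} [NormedAddCommGroup G] [InnerProductSpace ℝ G] [CompleteSpace G]
    {H : Type} [NormedAddCommGroup H] [InnerProductSpace ℝ H] [CompleteSpace H]
    [MeasurableSpace H] [BorelSpace H] [SecondCountableTopology H]
    {Ω : Type} [MeasurableSpace Ω]
    (P : Measure Ω) (hP : IsProbabilityMeasure P)
    (bG : HilbertBasis ℕ ℝ G)
    (T : ℝ) (hT : 0 < T)
    (α p : ℝ) (hα : 0 < α) (hα2 : α < 2) (hp : 0 < p) (hpα : p < α) :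
    ∃ c : ℝ, 0 < c ∧
      ∀ -- `ψ` is an `L₂(G,H)`-valued step function:
        (N : ℕ) (tp : Fin (N + 1) → ℝ) (htp : StrictMono tp)
        (htp0 : tp 0 = 0) (htpT : tp (Fin.last N) = T)
        (Φ : Fin N → (G →L[ℝ] H))
        (hHS : ∀ i, Summable fun k => ‖Φ i (bG k)‖ ^ 2)
        (ψ : ℝ → (G →L[ℝ] H))
        (hψ : ∀ s, s ≠ 0 → ψ s = ∑ i : Fin N,
          if s ∈ Set.Ioc (tp i.castSucc) (tp i.succ) then Φ i else 0)
        -- `γ` is an `L(H,H)`-valued step function bounded by `1` in operator norm: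
        (M : ℕ) (sp : Fin (M + 1) → ℝ) (hsp : StrictMono sp)
        (hsp0 : sp 0 = 0) (hspT : sp (Fin.last M) = T)
        (Γop : Fin M → (H →L[ℝ] H))
        (γ : ℝ → (H →L[ℝ] H))
        (hγ : ∀ s, s ≠ 0 → γ s = ∑ i : Fin M,
          if s ∈ Set.Ioc (sp i.castSucc) (sp i.succ) then Γop i else 0)
        (hγbdd : ∀ s, ‖γ s‖ ≤ 1)
        -- `X = ∫₀^T γψ dL` is the stochastic integral, i.e. the sum of the Radonified
        -- increments; it has characteristic function `exp(-∫₀^T ‖(γψ)(t)* u‖^α dt)`: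
        (X : Ω → H) (hX : Measurable X)
        (hchar : ∀ u : H,
          ∫ ω, Complex.exp (⟪u, X ω⟫ * Complex.I) ∂P
            = Complex.exp (-(∫ t in Set.Ioc 0 T,
                ‖(ContinuousLinearMap.adjoint ((γ t).comp (ψ t))) u‖ ^ α : ℝ))),
        (∫⁻ ω, (‖X ω‖₊ : ENNReal) ^ p ∂P
          ≤ ENNReal.ofReal (c *
              (∫ t in Set.Ioc 0 T, (∑' i, ‖ψ t (bG i)‖ ^ 2) ^ (α / 2)) ^ (p / α)))
        ∧ ∀ ε : ℝ, 0 < ε →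
            P {ω | ε < ‖X ω‖}
              ≤ ENNReal.ofReal (ε ^ (-p) * c *
                  (∫ t in Set.Ioc 0 T, (∑' i, ‖ψ t (bG i)‖ ^ 2) ^ (α / 2)) ^ (p / α)) := by
  classical
  have hK : 0 < (1 - Real.exp (-(1/2)))⁻¹ := by
    have : Real.exp (-(1/2)) < 1 := Real.exp_lt_one_iff.2 (by norm_num)
    exact inv_pos.2 (by linarith)
  have hap : 0 < α - p := by linarith
  refine ⟨1 + p * (1 - Real.exp (-(1/2)))⁻¹ / (α - p), by positivity, ?_⟩
  intro N tp htp htp0 htpT Φ hHS ψ hψ M sp hsp hsp0 hspT Γop γ hγ hγbdd X hX hchar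
  set c := 1 + p * (1 - Real.exp (-(1/2)))⁻¹ / (α - p) with hc
  have hc0 : 0 < c := by positivity
  set A := ∫ t in Set.Ioc 0 T, (∑' i, ‖ψ t (bG i)‖ ^ 2) ^ (α / 2) with hA
  have hA0 : 0 ≤ A := integral_nonneg fun t => by
    have : 0 ≤ ∑' i, ‖ψ t (bG i)‖ ^ 2 := tsum_nonneg fun i => by positivity
    simp only [Pi.zero_apply]
    positivity
  let q : ℝ → (Fin N → Bool) × (Fin M → Bool) := fun t =>
    (fun i => decide (t ∈ Set.Ioc (tp i.castSucc) (tp i.succ)),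
     fun j => decide (t ∈ Set.Ioc (sp j.castSucc) (sp j.succ)))
  have hq : Measurable q := by
    refine Measurable.prodMk (measurable_pi_lambda _ fun i => ?_)
      (measurable_pi_lambda _ fun j => ?_)
    · exact meas_dec _ _
    · exact meas_dec _ _
  let phi : (Fin N → Bool) × (Fin M → Bool) → (G →L[ℝ] H) := fun b =>
    ∑ i, if b.1 i = true then Φ i else 0
  let gam0 : (Fin N → Bool) × (Fin M → Bool) → (H →L[ℝ] H) := fun b =>
    ∑ j, if b.2 j = true then Γop j else 0
  let gam : (Fin N → Bool) × (Fin M → Bool) → (H →L[ℝ] H) := fun b =>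
    if ‖gam0 b‖ ≤ 1 then gam0 b else 0
  have hpsi : ∀ t ∈ Set.Ioc 0 T, ψ t = phi (q t) := by
    intro t ht
    rw [hψ t ht.1.ne']
    simp [phi, q]
  have hgam0 : ∀ t ∈ Set.Ioc 0 T, γ t = gam0 (q t) := by
    intro t ht
    rw [hγ t ht.1.ne']
    simp [gam0, q]
  have hgam : ∀ t ∈ Set.Ioc 0 T, γ t = gam (q t) := by
    intro t ht
    have h1 := hgam0 t ht
    have h2 : ‖gam0 (q t)‖ ≤ 1 := h1 ▸ hγbdd t
    simp only [gam]
    rw [if_pos h2, h1]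
  have hgb : ∀ b, ‖gam b‖ ≤ 1 := by
    intro b
    simp only [gam]
    split_ifs with h
    · exact h
    · simp
  have hphis : ∀ b, Summable fun k => ‖phi b (bG k)‖ ^ 2 := by
    intro b
    refine Summable.of_nonneg_of_le (fun k => by positivity) (fun k => ?_)
      ((summable_sum (s := Finset.univ) fun i _ => hHS i).mul_left (N : ℝ))
    have h1 : ‖phi b (bG k)‖ ≤ ∑ i, ‖Φ i (bG k)‖ := by
      simp only [phi, _root_.sum_apply]
      refine (norm_sum_le _ _).trans (Finset.sum_le_sum fun i _ => ?_)
      split_ifs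
      · exact le_rfl
      · simp
    calc _ ≤ (∑ i, ‖Φ i (bG k)‖) ^ 2 := by gcongr
      _ ≤ _ := by
        have := sq_sum_le_card_mul_sum_sq (s := (Finset.univ : Finset (Fin N)))
          (f := fun i => ‖Φ i (bG k)‖)
        simpa using this
  set w : (Fin N → Bool) × (Fin M → Bool) → ℝ := fun b =>
    ((volume.restrict (Set.Ioc 0 T)).map q).real {b} with hw
  have hAeq : A = ∑ b, w b * (∑' j, ‖phi b (bG j)‖ ^ 2) ^ (α / 2) :=
    integral_factor T q hq (fun b => (∑' j, ‖phi b (bG j)‖ ^ 2) ^ (α / 2)) _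
      fun t ht => by rw [hpsi t ht]
  have hchar2 : ∀ u : H, ∫ ω, Complex.exp (⟪u, X ω⟫ * Complex.I) ∂P
      = Complex.exp (-(∑ b, w b *
        ‖(ContinuousLinearMap.adjoint ((gam b).comp (phi b))) u‖ ^ α : ℝ)) := by
    intro u
    rw [hchar u, integral_factor T q hq
      (fun b => ‖(ContinuousLinearMap.adjoint ((gam b).comp (phi b))) u‖ ^ α) _
      fun t ht => by rw [hpsi t ht, hgam t ht]]
  have hexp := exp_bound P bG α hα hα2 w (fun b => measureReal_nonneg) phi gam hgb hphis X hX hchar2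
  rw [← hAeq] at hexp
  have hmom := moment_bound P α p _ A hp hpα hK hA0 (fun ω => ‖X ω‖) (fun ω => norm_nonneg _)
    hX.norm (tail_bound P α A X hX hexp)
  have hfirst : ∫⁻ ω, (‖X ω‖₊ : ENNReal) ^ p ∂P ≤ ENNReal.ofReal (c * A ^ (p / α)) := by
    refine le_trans (le_of_eq (lintegral_congr fun ω => ?_)) hmom
    rw [← ENNReal.ofReal_rpow_of_nonneg (norm_nonneg _) hp.le, ofReal_norm]
    rfl
  refine ⟨hfirst, fun ε hε => ?_⟩
  have hmk := mul_meas_ge_le_lintegral₀ (μ := P) (f := fun ω => (‖X ω‖₊ : ENNReal) ^ p)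
    (by fun_prop) (ENNReal.ofReal (ε ^ p))
  have hsub : {ω | ε < ‖X ω‖} ⊆ {ω | ENNReal.ofReal (ε ^ p) ≤ (‖X ω‖₊ : ENNReal) ^ p} := by
    intro ω hω
    simp only [Set.mem_ofPred_eq] at hω ⊢
    rw [← ENNReal.ofReal_rpow_of_nonneg hε.le hp.le]
    refine ENNReal.rpow_le_rpow ?_ hp.le
    rw [← enorm_eq_nnnorm, ← ofReal_norm]
    exact ENNReal.ofReal_le_ofReal hω.le
  have h1 : ENNReal.ofReal (ε ^ p) * P {ω | ε < ‖X ω‖} ≤ ENNReal.ofReal (c * A ^ (p / α)) :=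
    (mul_le_mul_right (measure_mono hsub) _).trans (hmk.trans hfirst)
  have hεp : 0 < ε ^ p := by positivity
  rw [mul_assoc, ENNReal.ofReal_mul (by positivity), Real.rpow_neg hε.le,
    ENNReal.ofReal_inv_of_pos hεp, ← ENNReal.div_eq_inv_mul]
  rw [ENNReal.le_div_iff_mul_le (Or.inl (by simpa using hεp)) (Or.inl ENNReal.ofReal_ne_top),
    mul_comm]
  exact h1
end
end
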